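/- arXiv:1407.4637 — 2 statements merged into one kernel-verified Lean document; each statement's English description precedes it below -/
import Mathlib

section
/- Let 1 ≤ p < ∞ and let ρ be an admissible weight function on [0,∞). The following assertions are equivalent: (1) the translation semigroup (T_t)_{t≥0} is frequently hypercyclic on L_p^ρ([0,∞)); (2) Σ_{k∈ℕ} ρ(k) < ∞; (3) ∫_0^∞ ρ(t) dt < ∞; (4) the translation semigroup (T_t)_{t≥0} is chaotic on L_p^ρ([0,∞)). -/
/-!
All four properties are compared with integrability of the weight `ρ`. Admissibility says that `ρ`
cannot drop by more than a constant factor over a window of bounded length, so that `∫ ρ` and the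
sums of `ρ` along arithmetic progressions converge or diverge together
(`AdmissibleH.summable_iff_integrableOn`, `AdmissibleH.integrableOn_of_tsum`).

*Frequent hypercyclicity implies summability* (`FHTransLpH.summable`). Let `B` be the set of integer
times near which the orbit of `f` is close to the indicator of `[0,1)`. For `n ∈ B` the translate of
`f` by `n` has definite mass near every `m ∈ B - n`, which bounds `∑ ρ m` over `m ∈ B - n` uniformly
in `n`. Following Bayart and Ruzsa, averaging over `n ∈ B` bounds the sum of `ρ` over the set of `m`
for which `B ∩ (B - m)` has density at least `δ`; that set is syndetic because `B` has positive
density, and admissibility extends summability to all integers (`summable_of_density`).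

*Chaos implies integrability* (`ChaoticTransLpH.integrableOn`). A periodic function close to the
indicator of `[0,1)` has the same positive mass on every period, and lies in the space only if `ρ`
is summable along the period.

*Integrability implies frequent hypercyclicity* (`FHTransLpH.of_integrableOn`). A finite measure
`ρ dx` integrates a monotone function `ψ` tending to infinity. Truncations `G a` of a dense sequence
to `[0, a]`, with `|G a| ^ p ≤ ψ a`, are placed on disjoint blocks, the `k`-th block carrying `G a`
with `a = v₂ (k + 1)`. Each `a` is thus used with positive density; by Legendre's formula the blocks
still have bounded average length, and they can be separated so far that, seen from a block of type
`a`, every later block of type `a'` starts beyond `a + a'`. The error there is dominated by `ψ`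
on `[a, ∞)`, whose integral tends to zero (`blockSum_error`). Uniform boundedness of `T_s` for
`s ≤ 1` turns these discrete return times into short intervals.

*Integrability implies chaos*: frequent hypercyclicity gives hypercyclicity, and a compactly
supported continuous function is close to a periodic one since `ρ dx` has small tails
(`exists_periodic_close`).
-/

open Filter MeasureTheory

/-- An admissible weight function on `[0,∞)`. -/
def AdmissibleH (ρ : ℝ → ℝ) : Prop :=
  Measurable ρ ∧ (∀ x, 0 ≤ x → 0 < ρ x) ∧
    ∃ M : ℝ, 1 ≤ M ∧ ∃ ω : ℝ, ∀ τ : ℝ, 0 ≤ τ → ∀ t : ℝ, 0 < t →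
      ρ τ ≤ M * Real.exp (ω * t) * ρ (τ + t)

/-- The lower density of a measurable set `M ⊆ [0,∞)`. -/
noncomputable def ldensR (M : Set ℝ) : ℝ :=
  atTop.liminf fun N : ℝ => (volume (M ∩ Set.Icc 0 N)).toReal / N

/-- Membership in `L_p^ρ([0,∞))`. -/
def MemLpRhoH (p : ℝ) (ρ : ℝ → ℝ) (f : ℝ → ℝ) : Prop :=
  Measurable f ∧ (∫⁻ x in Set.Ici (0 : ℝ), ENNReal.ofReal (|f x| ^ p * ρ x)) < ⊤

/-- The `L_p^ρ([0,∞))`-distance of `T_t f` and `g`, to the power `p`, is at most `ε^p`. -/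
def TransLpCloseH (p : ℝ) (ρ : ℝ → ℝ) (f g : ℝ → ℝ) (t ε : ℝ) : Prop :=
  (∫⁻ x in Set.Ici (0 : ℝ), ENNReal.ofReal (|f (x + t) - g x| ^ p * ρ x)) ≤
    ENNReal.ofReal (ε ^ p)

/-- Frequent hypercyclicity of the translation semigroup on `L_p^ρ([0,∞))`. -/
def FHTransLpH (p : ℝ) (ρ : ℝ → ℝ) : Prop :=
  ∃ f : ℝ → ℝ, MemLpRhoH p ρ f ∧ ∀ g : ℝ → ℝ, MemLpRhoH p ρ g → ∀ ε : ℝ, 0 < ε →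
    0 < ldensR {t : ℝ | 0 ≤ t ∧ TransLpCloseH p ρ f g t ε}

/-- Chaos of the translation semigroup on `L_p^ρ([0,∞))`. -/
def ChaoticTransLpH (p : ℝ) (ρ : ℝ → ℝ) : Prop :=
  (∃ f : ℝ → ℝ, MemLpRhoH p ρ f ∧ ∀ g : ℝ → ℝ, MemLpRhoH p ρ g → ∀ ε : ℝ, 0 < ε →
      ∃ t : ℝ, 0 ≤ t ∧ TransLpCloseH p ρ f g t ε) ∧
  (∀ g : ℝ → ℝ, MemLpRhoH p ρ g → ∀ ε : ℝ, 0 < ε → ∃ f : ℝ → ℝ, MemLpRhoH p ρ f ∧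
      (∃ t : ℝ, 0 < t ∧
        (∫⁻ x in Set.Ici (0 : ℝ), ENNReal.ofReal (|f (x + t) - f x| ^ p * ρ x)) = 0) ∧
      (∫⁻ x in Set.Ici (0 : ℝ), ENNReal.ofReal (|f x - g x| ^ p * ρ x)) ≤
        ENNReal.ofReal (ε ^ p))

open Set Topology
open scoped ENNReal

/-! ### Admissible weights: local comparability, series and integrals -/

/-- On windows of bounded length `L`, an admissible weight decreases at most by a constant factor. -/
lemma AdmissibleH.exists_const {ρ : ℝ → ℝ} (hρ : AdmissibleH ρ) (L : ℝ) :
    ∃ C : ℝ, 0 < C ∧ ∀ x, 0 ≤ x → ∀ t, 0 ≤ t → t ≤ L → ρ x ≤ C * ρ (x + t) := by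
  obtain ⟨-, hpos, M, hM, ω, h⟩ := hρ
  refine ⟨M * Real.exp (|ω| * L), by positivity, fun x hx t ht htL => ?_⟩
  have hxt := hpos (x + t) (by linarith)
  have hL : 0 ≤ L := ht.trans htL
  rcases ht.eq_or_lt with rfl | ht'
  · have h1 : 1 ≤ Real.exp (|ω| * L) := Real.one_le_exp (by positivity)
    have : 1 ≤ M * Real.exp (|ω| * L) := by nlinarith
    rw [add_zero] at hxt ⊢
    nlinarith
  · refine (h x hx t ht').trans ?_
    have : ω * t ≤ |ω| * L := by
      calc ω * t ≤ |ω| * t := by gcongr; exact le_abs_self ω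
        _ ≤ _ := by gcongr
    gcongr

lemma AdmissibleH.exists_const_ofReal {ρ : ℝ → ℝ} (hρ : AdmissibleH ρ) (L : ℝ) :
    ∃ C : ℝ, 0 < C ∧ ∀ x, 0 ≤ x → ∀ y, x ≤ y → y ≤ x + L →
      ENNReal.ofReal (ρ x) ≤ ENNReal.ofReal C * ENNReal.ofReal (ρ y) := by
  obtain ⟨C, hC, h⟩ := hρ.exists_const L
  refine ⟨C, hC, fun x hx y hxy hyL => ?_⟩
  rw [← ENNReal.ofReal_mul hC.le]
  have := h x hx (y - x) (by linarith) (by linarith)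
  rw [add_sub_cancel] at this
  exact ENNReal.ofReal_le_ofReal this

lemma lintegral_Ici_eq_tsum {t : ℝ} (ht : 0 < t) (h : ℝ → ℝ≥0∞) :
    ∫⁻ x in Ici (0 : ℝ), h x = ∑' k : ℕ, ∫⁻ x in Ico (k * t) ((k + 1) * t), h x := by
  have hU : Ici (0 : ℝ) = ⋃ k : ℕ, Ico (k * t) ((k + 1) * t) := by
    ext x
    simp only [mem_Ici, mem_iUnion, mem_Ico]
    constructor
    · intro hx
      refine ⟨⌊x / t⌋₊, ?_, ?_⟩
      · rw [← le_div_iff₀ ht]; exact Nat.floor_le (by positivity)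
      · rw [← div_lt_iff₀ ht]; exact Nat.lt_floor_add_one _
    · rintro ⟨k, hk, -⟩
      exact le_trans (by positivity) hk
  rw [hU]
  refine lintegral_iUnion (fun _ => measurableSet_Ico) ?_ _
  have hmono : Monotone fun k : ℕ => (k : ℝ) * t := fun a b hab => by
    have : (a : ℝ) ≤ b := by exact_mod_cast hab
    simp only
    gcongr
  have := hmono.pairwise_disjoint_on_Ico_succ
  simpa using this

lemma AdmissibleH.integrableOn_iff {ρ : ℝ → ℝ} (hρ : AdmissibleH ρ) :
    IntegrableOn ρ (Ici 0) volume ↔ ∫⁻ x in Ici (0 : ℝ), ENNReal.ofReal (ρ x) ≠ ⊤ := by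
  rw [lintegral_ofReal_ne_top_iff_integrable hρ.1.aestronglyMeasurable]
  · rfl
  · filter_upwards [ae_restrict_mem measurableSet_Ici] with x hx using (hρ.2.1 x hx).le

/-- Sampling the weight along an arithmetic progression detects its integrability: the mass of the
`k`-th period is at most a constant times the next sample. -/
lemma AdmissibleH.integrableOn_of_tsum {ρ : ℝ → ℝ} (hρ : AdmissibleH ρ) {t : ℝ} (ht : 0 < t)
    (h : ∑' k : ℕ, ENNReal.ofReal (ρ (k * t)) ≠ ⊤) : IntegrableOn ρ (Ici 0) volume := by
  rw [hρ.integrableOn_iff, lintegral_Ici_eq_tsum ht]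
  obtain ⟨C, hC, hc⟩ := hρ.exists_const_ofReal t
  have hb : ∀ k : ℕ, ∫⁻ x in Ico (k * t) ((k + 1) * t), ENNReal.ofReal (ρ x) ≤
      ENNReal.ofReal C * ENNReal.ofReal t * ENNReal.ofReal (ρ ((k + 1 : ℕ) * t)) := by
    intro k
    calc ∫⁻ x in Ico (k * t) ((k + 1) * t), ENNReal.ofReal (ρ x)
        ≤ ∫⁻ x in Ico (k * t) ((k + 1) * t),
            ENNReal.ofReal C * ENNReal.ofReal (ρ ((k + 1 : ℕ) * t)) := by
          refine setLIntegral_mono' measurableSet_Ico fun x hx => ?_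
          have h0 : 0 ≤ (k : ℝ) * t := by positivity
          have h1 : (k + 1 : ℝ) * t = k * t + t := by ring
          refine hc x (h0.trans hx.1) _ (by push_cast; exact hx.2.le) ?_
          push_cast
          linarith [hx.1]
      _ = _ := by
          rw [setLIntegral_const, Real.volume_Ico]
          have h1 : (k + 1 : ℝ) * t - k * t = t := by ring
          rw [h1]; ring
  refine ne_top_of_le_ne_top ?_ (ENNReal.tsum_le_tsum hb)
  rw [ENNReal.tsum_mul_left]
  refine ENNReal.mul_ne_top (by finiteness) (ne_top_of_le_ne_top h ?_)
  exact ENNReal.tsum_comp_le_tsum_of_injective (Nat.succ_injective)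
    (fun k : ℕ => ENNReal.ofReal (ρ (k * t)))

lemma AdmissibleH.summable_iff_tsum {ρ : ℝ → ℝ} (hρ : AdmissibleH ρ) :
    Summable (fun k : ℕ => ρ k) ↔ ∑' k : ℕ, ENNReal.ofReal (ρ k) ≠ ⊤ := by
  constructor
  · exact fun h => h.tsum_ofReal_ne_top
  · intro h
    have := ENNReal.summable_toReal h
    refine this.congr fun k => ?_
    rw [ENNReal.toReal_ofReal (hρ.2.1 _ (by positivity)).le]

lemma AdmissibleH.summable_iff_integrableOn {ρ : ℝ → ℝ} (hρ : AdmissibleH ρ) :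
    Summable (fun k : ℕ => ρ k) ↔ IntegrableOn ρ (Ici 0) volume := by
  rw [hρ.summable_iff_tsum]
  constructor
  · intro h
    exact hρ.integrableOn_of_tsum one_pos (by simpa using h)
  · rw [hρ.integrableOn_iff, lintegral_Ici_eq_tsum one_pos]
    intro h
    obtain ⟨C, hC, hc⟩ := hρ.exists_const_ofReal 1
    have hb : ∀ k : ℕ, ENNReal.ofReal (ρ k) ≤ ENNReal.ofReal C *
        ∫⁻ x in Ico ((k : ℝ) * 1) ((k + 1) * 1), ENNReal.ofReal (ρ x) := by
      intro k
      rw [← lintegral_const_mul' _ _ (by finiteness)]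
      calc ENNReal.ofReal (ρ k)
          = ∫⁻ x in Ico ((k : ℝ) * 1) ((k + 1) * 1), ENNReal.ofReal (ρ k) := by
            simp
        _ ≤ _ := by
            refine setLIntegral_mono' measurableSet_Ico fun x hx => ?_
            rw [mul_one, mul_one] at hx
            exact hc k (by positivity) x hx.1 hx.2.le
    refine ne_top_of_le_ne_top ?_ (ENNReal.tsum_le_tsum hb)
    rw [ENNReal.tsum_mul_left]
    exact ENNReal.mul_ne_top (by finiteness) h

/-! ### Difference sets of sets of positive lower density -/

/-- Pairwise almost disjoint translates of a dense set cannot be numerous: a Bonferroni-type bound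
for translates of `B ∩ [0, N)`, whose pairwise intersections are counted by differences. -/
lemma card_translates_le (B : Set ℕ) [DecidablePred (· ∈ B)] (N : ℕ) (d δ : ℝ) (hδ : 0 ≤ δ)
    (hd : d ≤ ((Finset.range N).filter (· ∈ B)).card) (R : Finset ℕ)
    (hR : ∀ r ∈ R, ∀ s ∈ R, r < s →
      (((Finset.range N).filter fun n => n ∈ B ∧ n + (s - r) ∈ B).card : ℝ) ≤ δ) :
    R.card * d ≤
      ((R.biUnion fun r => ((Finset.range N).filter (· ∈ B)).image (· + r)).card : ℝ)
        + R.card ^ 2 * δ := by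
  classical
  induction R using Finset.induction_on_max with
  | empty => simp
  | insert a s hs ih =>
    have ih := ih fun r hr t ht => hR r (Finset.mem_insert_of_mem hr) t (Finset.mem_insert_of_mem ht)
    have ha : a ∉ s := fun h => lt_irrefl _ (hs a h)
    rw [Finset.biUnion_insert, Finset.card_insert_of_notMem ha]
    set T := fun r => ((Finset.range N).filter (· ∈ B)).image (· + r) with hT
    have hcardT : (T a).card = ((Finset.range N).filter (· ∈ B)).card :=
      Finset.card_image_of_injective _ (add_left_injective a)
    have hI : ((T a ∩ s.biUnion T).card : ℝ) ≤ s.card * δ := by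
      rw [Finset.inter_biUnion]
      calc ((s.biUnion fun r => T a ∩ T r).card : ℝ)
          ≤ ∑ r ∈ s, ((T a ∩ T r).card : ℝ) := by exact_mod_cast Finset.card_biUnion_le
        _ ≤ ∑ r ∈ s, δ := by
            refine Finset.sum_le_sum fun r hr => ?_
            refine le_trans ?_ (hR r (Finset.mem_insert_of_mem hr) a (Finset.mem_insert_self _ _)
              (hs r hr))
            have hra := hs r hr
            rw [← Finset.card_image_of_injective
              ((Finset.range N).filter fun n => n ∈ B ∧ n + (a - r) ∈ B) (add_left_injective a)]
            norm_cast
            refine Finset.card_le_card fun x hx => ?_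
            simp only [hT, Finset.mem_inter, Finset.mem_image, Finset.mem_filter,
              Finset.mem_range] at hx ⊢
            obtain ⟨⟨n, ⟨hn, hnB⟩, rfl⟩, m, ⟨hm, hmB⟩, hmn⟩ := hx
            refine ⟨n, ⟨hn, hnB, ?_⟩, rfl⟩
            have : n + (a - r) = m := by omega
            rwa [this]
        _ = _ := by simp
    have hu : ((T a ∪ s.biUnion T).card : ℝ) + (T a ∩ s.biUnion T).card
        = (T a).card + (s.biUnion T).card := by
      exact_mod_cast Finset.card_union_add_card_inter _ _
    rw [hcardT] at hu
    push_cast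
    nlinarith

/-- A set of differences missing arbitrarily long intervals contains no difference of two elements
of a suitable `k`-element set. -/
lemma exists_finset_of_gaps (E : ℕ → Prop) (hgap : ∀ L, ∃ a, ∀ m, a ≤ m → m ≤ a + L → ¬ E m)
    (k : ℕ) : ∃ R : Finset ℕ, R.card = k ∧ ∀ r ∈ R, ∀ s ∈ R, r < s → ¬ E (s - r) := by
  induction k with
  | zero => exact ⟨∅, by simp⟩
  | succ k ih =>
    obtain ⟨R, hk, hR⟩ := ih
    obtain ⟨b, hb⟩ : ∃ b, ∀ r ∈ R, r < b := ⟨R.sup id + 1, fun r hr =>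
      Nat.lt_succ_of_le (Finset.le_sup (f := id) hr)⟩
    obtain ⟨a, ha⟩ := hgap b
    have hn : a + b ∉ R := fun h => by have := hb _ h; omega
    refine ⟨insert (a + b) R, by rw [Finset.card_insert_of_notMem hn, hk], ?_⟩
    intro r hr s hs hrs
    rw [Finset.mem_insert] at hr hs
    rcases hs with rfl | hs
    · rcases hr with rfl | hr
      · omega
      · have := hb r hr
        exact ha _ (by omega) (by omega)
    · rcases hr with rfl | hr
      · have := hb s hs; omega
      · exact hR r hr s hs hrs

/-- The combinatorial core. If the weights `v` have sums bounded by `C₁` over `B - n`, for every `n`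
in a set `B` of positive lower density, then averaging over `n ∈ B` along an ultrafilter shows that
`v` is summable over the set `E` of those `m` for which `B ∩ (B - m)` is large. The set `E` is
syndetic, because a positive-density set has no large family of almost disjoint translates, and the
growth condition on `v` spreads summability from `E` to all of `ℕ`. -/
lemma summable_of_density (B : Set ℕ) [DecidablePred (· ∈ B)] {d : ℝ} (hd : 0 < d)
    (hB : ∀ᶠ N : ℕ in atTop, d * N ≤ ((Finset.range N).filter (· ∈ B)).card)
    (v : ℕ → ℝ) (hv0 : ∀ m, 0 ≤ v m) (C₁ : ℝ)
    (hC : ∀ n ∈ B, ∀ K, ∑ m ∈ Finset.range K, (if n + m ∈ B then v m else 0) ≤ C₁)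
    (hv : ∀ L : ℕ, ∃ C : ℝ, 0 ≤ C ∧ ∀ a l, l ≤ L → v a ≤ C * v (a + l)) : Summable v := by
  classical
  -- along `U` the density of each `B ∩ (B - m)` behaves like a limit
  set U : Ultrafilter ℕ := Ultrafilter.of atTop with hU
  have hle : (U : Filter ℕ) ≤ atTop := Ultrafilter.of_le atTop
  -- `k` translates overlapping in density at most `δ = 1 / k ^ 2` would need density `k * d - 1`
  -- inside `[0, 2 * N)`, which exceeds `2`
  obtain ⟨k, hk⟩ := exists_nat_gt (4 / d)
  have hk4 : 4 < k * d := by rwa [div_lt_iff₀ hd] at hk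
  have hk0 : (0 : ℝ) < k := by
    rcases (Nat.cast_nonneg k : (0 : ℝ) ≤ k).eq_or_lt with h | h
    · rw [← h] at hk4; linarith
    · exact h
  set δ : ℝ := 1 / k ^ 2 with hδ
  have hδ0 : 0 < δ := by positivity
  set c : ℕ → ℕ → ℕ := fun m N => ((Finset.range N).filter fun n => n ∈ B ∧ n + m ∈ B).card with hc
  let E : ℕ → Prop := fun m => ∀ᶠ N in (U : Filter ℕ), δ * N < c m N
  have hEsyn : ∃ L, ∀ a, ∃ m, a ≤ m ∧ m ≤ a + L ∧ E m := by
    by_contra! hcon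
    obtain ⟨R, hRk, hR⟩ := exists_finset_of_gaps E hcon k
    have h1 : ∀ᶠ N in (U : Filter ℕ), ∀ r ∈ R, ∀ s ∈ R, r < s → (c (s - r) N : ℝ) ≤ δ * N := by
      rw [Finset.eventually_all]
      intro r hr
      rw [Finset.eventually_all]
      intro s hs
      rw [eventually_imp_distrib_left]
      intro hrs
      have := hR r hr s hs hrs
      rw [← Ultrafilter.eventually_not] at this
      exact this.mono fun N hN => not_lt.1 hN
    obtain ⟨N, ⟨hN1, hN2⟩, hN3⟩ := ((h1.and (hle hB)).and
      (hle (eventually_ge_atTop (R.sup id + 1)))).exists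
    have h2 := card_translates_le B N (d * N) (δ * N) (by positivity) hN2 R hN1
    have h3 : ((R.biUnion fun r => ((Finset.range N).filter (· ∈ B)).image (· + r)).card : ℝ)
        ≤ 2 * N := by
      have : (R.biUnion fun r => ((Finset.range N).filter (· ∈ B)).image (· + r)) ⊆
          Finset.range (2 * N) := by
        intro x hx
        simp only [Finset.mem_biUnion, Finset.mem_image, Finset.mem_filter, Finset.mem_range] at hx ⊢
        obtain ⟨r, hr, n, ⟨hn, -⟩, rfl⟩ := hx
        have : r ≤ R.sup id := Finset.le_sup (f := id) hr
        omega
      have := Finset.card_le_card this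
      rw [Finset.card_range] at this
      exact_mod_cast this
    have hN0 : (1 : ℝ) ≤ N := by
      have : 1 ≤ N := by omega
      exact_mod_cast this
    rw [hRk] at h2
    have h4 : (k : ℝ) ^ 2 * (δ * N) = N := by rw [hδ]; field_simp
    nlinarith
  -- double counting of the pairs `(n, m)` with `n ∈ B`, `n < N`, `n + m ∈ B`
  have hEsum : ∀ K, ∑ m ∈ Finset.range K, (if E m then v m else 0) ≤ C₁ / δ := by
    intro K
    have h1 : ∀ᶠ N in (U : Filter ℕ), ∀ m ∈ Finset.range K, E m → δ * N ≤ c m N := by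
      rw [Finset.eventually_all]
      intro m _
      rw [eventually_imp_distrib_left]
      intro hm
      exact hm.mono fun N hN => hN.le
    have hBne : ∃ n, n ∈ B := by
      obtain ⟨N, hN, hN1⟩ := (hB.and (eventually_ge_atTop 1)).exists
      have hN1' : (1 : ℝ) ≤ N := by exact_mod_cast hN1
      have : (0 : ℝ) < ((Finset.range N).filter (· ∈ B)).card := by nlinarith
      obtain ⟨n, hn⟩ := Finset.card_pos.1 (by exact_mod_cast this)
      exact ⟨n, (Finset.mem_filter.1 hn).2⟩
    have hC1 : 0 ≤ C₁ := by
      obtain ⟨n, hn⟩ := hBne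
      simpa using hC n hn 0
    obtain ⟨N, hN, hN1⟩ := (h1.and (hle (eventually_ge_atTop 1))).exists
    have hN0 : (1 : ℝ) ≤ N := by exact_mod_cast hN1
    have h2 : ∑ m ∈ Finset.range K, (if E m then v m else 0) * (δ * N) ≤ C₁ * N := by
      calc ∑ m ∈ Finset.range K, (if E m then v m else 0) * (δ * N)
          ≤ ∑ m ∈ Finset.range K, v m * c m N := by
            refine Finset.sum_le_sum fun m hm => ?_
            split_ifs with h
            · exact mul_le_mul_of_nonneg_left (hN m hm h) (hv0 m)
            · rw [zero_mul]; exact mul_nonneg (hv0 m) (Nat.cast_nonneg _)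
        _ = ∑ m ∈ Finset.range K, ∑ n ∈ (Finset.range N).filter (· ∈ B),
              (if n + m ∈ B then v m else 0) := by
            refine Finset.sum_congr rfl fun m _ => ?_
            rw [← Finset.sum_filter, Finset.filter_filter, Finset.sum_const, nsmul_eq_mul, mul_comm]
        _ = ∑ n ∈ (Finset.range N).filter (· ∈ B), ∑ m ∈ Finset.range K,
              (if n + m ∈ B then v m else 0) := Finset.sum_comm
        _ ≤ ∑ n ∈ (Finset.range N).filter (· ∈ B), C₁ :=
            Finset.sum_le_sum fun n hn => hC n (Finset.mem_filter.1 hn).2 K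
        _ ≤ C₁ * N := by
            rw [Finset.sum_const, nsmul_eq_mul, mul_comm]
            have : ((Finset.range N).filter (· ∈ B)).card ≤ N := by
              simpa using Finset.card_filter_le (Finset.range N) (· ∈ B)
            have : (((Finset.range N).filter (· ∈ B)).card : ℝ) ≤ N := by exact_mod_cast this
            gcongr
    rw [← Finset.sum_mul] at h2
    rw [le_div_iff₀ hδ0]
    nlinarith
  have hEs : Summable fun m => if E m then v m else 0 :=
    summable_of_sum_range_le (fun m => by split_ifs <;> simp [hv0]) hEsum
  obtain ⟨L, hL⟩ := hEsyn
  obtain ⟨C, hC0, hCv⟩ := hv L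
  have hs : Summable fun a => C * ∑ l ∈ Finset.range (L + 1), (if E (a + l) then v (a + l) else 0) := by
    refine Summable.mul_left _ (summable_sum fun l _ => ?_)
    exact (summable_nat_add_iff l).2 hEs
  refine Summable.of_nonneg_of_le hv0 (fun a => ?_) hs
  obtain ⟨m, ham, hmL, hm⟩ := hL a
  obtain ⟨l, rfl⟩ := Nat.exists_eq_add_of_le ham
  refine (hCv a l (by omega)).trans ?_
  gcongr
  refine le_trans (by rw [if_pos hm]) (Finset.single_le_sum
    (f := fun l => if E (a + l) then v (a + l) else 0)
    (fun i _ => by split_ifs <;> simp [hv0]) (Finset.mem_range.2 (by omega : l < L + 1)))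

/-! ### Frequent hypercyclicity forces summability of the weight -/

/-- Discretisation of lower density: the integers `k` for which `[k, k + 1)` meets `A`. -/
lemma density_discretise (A : Set ℝ) (hA : 0 < ldensR A) (B : Set ℕ) [DecidablePred (· ∈ B)]
    (hB : ∀ k : ℕ, ∀ t ∈ A, (k : ℝ) ≤ t → t < k + 1 → k ∈ B) :
    ∃ d : ℝ, 0 < d ∧
      ∀ᶠ N : ℕ in atTop, d * N ≤ ((Finset.range N).filter (· ∈ B)).card := by
  refine ⟨ldensR A / 2, by linarith, ?_⟩
  have h1 : ∀ᶠ N : ℝ in atTop, ldensR A / 2 < (volume (A ∩ Icc 0 N)).toReal / N := by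
    refine eventually_lt_of_lt_liminf (half_lt_self hA) ⟨0, ?_⟩
    rw [eventually_map]
    filter_upwards [eventually_ge_atTop 0] with N hN
    positivity
  filter_upwards [tendsto_natCast_atTop_atTop.eventually h1, eventually_gt_atTop 0] with N hN hN0
  have hN0' : (0 : ℝ) < N := by exact_mod_cast hN0
  rw [lt_div_iff₀ hN0'] at hN
  refine hN.le.trans ?_
  have hsub : A ∩ Icc (0 : ℝ) N ⊆
      (⋃ k ∈ (Finset.range N).filter (· ∈ B), Ico (k : ℝ) (k + 1)) ∪ {(N : ℝ)} := by
    rintro t ⟨htA, ht0, htN⟩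
    rcases htN.eq_or_lt with h | h
    · right; simpa using h
    left
    simp only [mem_iUnion, Finset.mem_filter, Finset.mem_range]
    have hf := Nat.floor_le ht0
    have hl := Nat.lt_floor_add_one t
    refine ⟨⌊t⌋₊, ⟨?_, hB _ t htA hf hl⟩, hf, hl⟩
    exact_mod_cast hf.trans_lt h
  have hv : volume (A ∩ Icc (0 : ℝ) N) ≤ (((Finset.range N).filter (· ∈ B)).card : ℝ≥0∞) := by
    refine (measure_mono hsub).trans ((measure_union_le _ _).trans ?_)
    rw [Real.volume_singleton, add_zero]
    refine (measure_biUnion_finset_le _ _).trans ?_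
    simp
  have := ENNReal.toReal_mono (by finiteness) hv
  simpa using this

lemma setLIntegral_Ico_shift (h : ℝ → ℝ≥0∞) (a b s : ℝ) :
    ∫⁻ x in Ico a b, h (x + s) = ∫⁻ x in Ico (a + s) (b + s), h x := by
  have := (measurePreserving_add_right volume s).setLIntegral_comp_preimage_emb
    (measurableEmbedding_addRight s) h (Ico (a + s) (b + s))
  rw [← this]
  simp

/-- The target `1_{[0,1)}` together with the lower bound for the weight on `[0,1]`: if `T_t f` is
close to it, then `f` has definite mass on `[t, t + 1)`, while the weighted mass of `T_t f` beyond
`1` is controlled. -/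
lemma AdmissibleH.exists_mass_bounds {p : ℝ} (hp : 1 ≤ p) {ρ : ℝ → ℝ} (hρ : AdmissibleH ρ) :
    ∃ ε : ℝ, 0 < ε ∧ ∃ c : ℝ, 0 < c ∧ ∀ f : ℝ → ℝ, Measurable f → ∀ t,
      TransLpCloseH p ρ f (indicator (Ico 0 1) 1) t ε →
      ENNReal.ofReal c ≤ ∫⁻ x in Ico (0 : ℝ) 1, ENNReal.ofReal (|f (x + t)| ^ p) ∧
      ∫⁻ x in Ici (1 : ℝ), ENNReal.ofReal (|f (x + t)| ^ p * ρ x) ≤ ENNReal.ofReal (ε ^ p) := by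
  have hp0 : 0 < p := by linarith
  obtain ⟨C, hC, hc⟩ := hρ.exists_const 1
  have hρ0 := hρ.2.1 0 le_rfl
  set r := ρ 0 / C with hr
  have hr0 : 0 < r := by positivity
  set q : ℝ := (1 / 2) ^ p with hq
  have hq0 : 0 < q := by positivity
  have hεp : ((r * (q / 2)) ^ (1 / p)) ^ p = r * (q / 2) := by
    rw [← Real.rpow_mul (by positivity), one_div, inv_mul_cancel₀ hp0.ne', Real.rpow_one]
  refine ⟨(r * (q / 2)) ^ (1 / p), by positivity, q / 2, by positivity, fun f hf t h => ?_⟩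
  rw [TransLpCloseH, hεp] at h
  rw [hεp]
  have hs1 : Ico (0 : ℝ) 1 ⊆ Ici 0 := fun x hx => hx.1
  have hs2 : Ici (1 : ℝ) ⊆ Ici 0 := fun x hx => mem_Ici.2 (zero_le_one.trans (mem_Ici.1 hx))
  constructor
  · have h1 := (lintegral_mono_set hs1).trans h
    have h2 : ENNReal.ofReal r * ∫⁻ x in Ico (0 : ℝ) 1, ENNReal.ofReal (|f (x + t) - 1| ^ p) ≤
        ENNReal.ofReal r * ENNReal.ofReal (q / 2) := by
      rw [← ENNReal.ofReal_mul hr0.le, ← lintegral_const_mul' _ _ (by finiteness)]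
      refine le_trans (setLIntegral_mono' measurableSet_Ico fun x hx => ?_) h1
      rw [indicator_of_mem hx, ← ENNReal.ofReal_mul hr0.le, mul_comm]
      have : r ≤ ρ x := by
        rw [hr, div_le_iff₀ hC]
        have := hc 0 le_rfl x hx.1 hx.2.le
        rw [zero_add] at this
        linarith
      simp only [Pi.one_apply]
      gcongr
    have h3 : ∫⁻ x in Ico (0 : ℝ) 1, ENNReal.ofReal (|f (x + t) - 1| ^ p) ≤
        ENNReal.ofReal (q / 2) :=
      (ENNReal.mul_le_mul_iff_right (by simpa using hr0) (by finiteness)).1 h2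
    have h4 : ENNReal.ofReal q ≤ (∫⁻ x in Ico (0 : ℝ) 1, ENNReal.ofReal (|f (x + t)| ^ p)) +
        ∫⁻ x in Ico (0 : ℝ) 1, ENNReal.ofReal (|f (x + t) - 1| ^ p) := by
      rw [← lintegral_add_left (by fun_prop)]
      calc ENNReal.ofReal q = ∫⁻ x in Ico (0 : ℝ) 1, ENNReal.ofReal q := by simp
        _ ≤ _ := by
          refine setLIntegral_mono' measurableSet_Ico fun x _ => ?_
          -- one of `|y|` and `|y - 1|` is at least `1 / 2`
          rcases le_total (1 / 2) |f (x + t)| with hy | hy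
          · exact le_add_right (ENNReal.ofReal_le_ofReal (by rw [hq]; gcongr))
          · refine le_add_left (ENNReal.ofReal_le_ofReal ?_)
            have : 1 / 2 ≤ |f (x + t) - 1| := by
              rw [abs_sub_comm]
              have := (le_abs_self (f (x + t))).trans hy
              exact le_trans (by linarith) (le_abs_self _)
            rw [hq]; gcongr
    have h5 : ENNReal.ofReal q = ENNReal.ofReal (q / 2) + ENNReal.ofReal (q / 2) := by
      rw [← ENNReal.ofReal_add (by positivity) (by positivity), add_halves]
    rw [h5] at h4
    exact ENNReal.le_of_add_le_add_right (by finiteness) (h4.trans (add_le_add_right h3 _))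
  · refine le_trans ?_ ((lintegral_mono_set hs2).trans h)
    refine (setLIntegral_congr_fun measurableSet_Ici fun x hx => ?_).le
    have : x ∉ Ico (0 : ℝ) 1 := fun h => absurd h.2 (not_lt.2 hx)
    simp only [indicator_of_notMem this, sub_zero]

/-- The intervals `[m - 1, m + 2)` cover every point at most three times. -/
lemma tsum_overlap_le (H : ℝ → ℝ≥0∞) :
    ∑' m : ℕ, ∫⁻ x in Ico ((m : ℝ) - 1) (m + 2), H x ≤ 3 * ∫⁻ x, H x := by
  have key : ∀ i : ℝ, ∑' m : ℕ, ∫⁻ x in Ico ((m : ℝ) + i) (m + 1 + i), H x ≤ ∫⁻ x, H x := by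
    intro i
    have hmono : Monotone fun k : ℕ => (k : ℝ) + i := fun a b hab => by
      have : (a : ℝ) ≤ b := by exact_mod_cast hab
      simp only
      gcongr
    have hd := hmono.pairwise_disjoint_on_Ico_succ
    rw [← lintegral_iUnion (fun _ => measurableSet_Ico) (by simpa using hd)]
    exact setLIntegral_le_lintegral _ _
  calc ∑' m : ℕ, ∫⁻ x in Ico ((m : ℝ) - 1) (m + 2), H x
      ≤ ∑' m : ℕ, ((∫⁻ x in Ico ((m : ℝ) + -1) (m + 1 + -1), H x) +
          (∫⁻ x in Ico ((m : ℝ) + 0) (m + 1 + 0), H x) +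
          (∫⁻ x in Ico ((m : ℝ) + 1) (m + 1 + 1), H x)) := by
        refine ENNReal.tsum_le_tsum fun m => ?_
        refine le_trans (lintegral_mono_set (t := (Ico ((m : ℝ) + -1) (m + 1 + -1) ∪
          Ico ((m : ℝ) + 0) (m + 1 + 0)) ∪ Ico ((m : ℝ) + 1) (m + 1 + 1)) ?_) ?_
        · intro x hx
          simp only [mem_union, mem_Ico] at hx ⊢
          rcases lt_or_ge x m with h | h
          · left; left; constructor <;> linarith
          · rcases lt_or_ge x (m + 1) with h' | h'
            · left; right; constructor <;> linarith
            · right; constructor <;> linarith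
        · refine (lintegral_union_le _ _ _).trans ?_
          gcongr
          exact lintegral_union_le _ _ _
    _ ≤ _ := by
        rw [ENNReal.tsum_add, ENNReal.tsum_add]
        have h3 : (3 : ℝ≥0∞) = 1 + 1 + 1 := by norm_num
        rw [h3, add_mul, add_mul, one_mul]
        gcongr <;> exact key _

/-- The indicator of `[0,1)` lies in the space. -/
lemma AdmissibleH.memLp_indicator {p : ℝ} (hp : 1 ≤ p) {ρ : ℝ → ℝ} (hρ : AdmissibleH ρ) :
    MemLpRhoH p ρ (indicator (Ico 0 1) 1) := by
  obtain ⟨C, hC, hc⟩ := hρ.exists_const_ofReal 1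
  refine ⟨measurable_one.indicator measurableSet_Ico, ?_⟩
  calc ∫⁻ x in Ici (0 : ℝ), ENNReal.ofReal (|indicator (Ico 0 1) 1 x| ^ p * ρ x)
      ≤ ∫⁻ x in Ici (0 : ℝ), indicator (Ico 0 1)
          (fun _ => ENNReal.ofReal C * ENNReal.ofReal (ρ 1)) x := by
        refine setLIntegral_mono' measurableSet_Ici fun x hx => ?_
        by_cases h : x ∈ Ico (0 : ℝ) 1
        · rw [indicator_of_mem h, indicator_of_mem h]
          simpa using hc x h.1 1 h.2.le (by linarith [h.1])
        · rw [indicator_of_notMem h, indicator_of_notMem h, abs_zero,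
            Real.zero_rpow (by linarith), zero_mul, ENNReal.ofReal_zero]
    _ ≤ ∫⁻ x, indicator (Ico 0 1) (fun _ => ENNReal.ofReal C * ENNReal.ofReal (ρ 1)) x :=
        setLIntegral_le_lintegral _ _
    _ < ⊤ := by
        rw [lintegral_indicator measurableSet_Ico, setLIntegral_const]
        simp only [Real.volume_Ico]
        exact ENNReal.mul_lt_top (by finiteness) (by finiteness)

/-- The good approximation times of `1_{[0,1)}`, rounded down, form a set `B` of positive lower
density. If `n` and `n + m` belong to `B`, then `T_t f`, for a good time `t` near `n`, has definite
mass near `m`, so that the weighted tail of `T_t f` controls the sum of `ρ (m - 1)` over `B - n`. -/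
lemma FHTransLpH.summable {p : ℝ} (hp : 1 ≤ p) {ρ : ℝ → ℝ} (hρ : AdmissibleH ρ)
    (h : FHTransLpH p ρ) : Summable (fun k : ℕ => ρ k) := by
  classical
  obtain ⟨f, ⟨hfm, -⟩, hf⟩ := h
  obtain ⟨ε, hε, c, hc, hmass⟩ := hρ.exists_mass_bounds hp
  have hdens := hf _ (hρ.memLp_indicator hp) ε hε
  set A := {t : ℝ | 0 ≤ t ∧ TransLpCloseH p ρ f (indicator (Ico 0 1) 1) t ε} with hA
  set B : Set ℕ := {k | ∃ t ∈ A, (k : ℝ) ≤ t ∧ t < k + 1} with hB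
  obtain ⟨d, hd, hdB⟩ := density_discretise A hdens B fun k t ht h1 h2 => ⟨t, ht, h1, h2⟩
  obtain ⟨C, hC, hCρ⟩ := hρ.exists_const_ofReal 3
  -- the shift by one absorbs the rounding of the times to integers
  set v : ℕ → ℝ := fun m => if m < 2 then 0 else ρ ((m - 1 : ℕ) : ℝ) with hv
  have hv0 : ∀ m, 0 ≤ v m := fun m => by
    simp only [hv]
    split_ifs
    · exact le_rfl
    · exact (hρ.2.1 _ (Nat.cast_nonneg _)).le
  have hbound : ∀ n ∈ B, ∀ K,
      ∑ m ∈ Finset.range K, (if n + m ∈ B then v m else 0) ≤ C * (3 * ε ^ p) / c := by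
    rintro n ⟨t, htA, hnt, htn⟩ K
    set F : ℝ → ℝ≥0∞ := fun x => ENNReal.ofReal (|f (x + t)| ^ p) with hF
    set H : ℝ → ℝ≥0∞ := indicator (Ici 1) fun x => ENNReal.ofReal (|f (x + t)| ^ p * ρ x) with hH
    have hterm : ∀ m, ENNReal.ofReal c * ENNReal.ofReal (if n + m ∈ B then v m else 0) ≤
        ENNReal.ofReal C * ∫⁻ x in Ico ((m : ℝ) - 1) (m + 2), H x := by
      intro m
      by_cases hm : n + m ∈ B
      swap
      · simp [hm]
      by_cases hm2 : m < 2
      · have : v m = 0 := by simp only [hv, if_pos hm2]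
        simp [this]
      rw [if_pos hm]
      simp only [hv, if_neg hm2]
      obtain ⟨t', ht'A, h1, h2⟩ := hm
      push_cast at h1 h2
      have hm2' : (2 : ℝ) ≤ m := by exact_mod_cast not_lt.1 hm2
      have hcast : ((m - 1 : ℕ) : ℝ) = m - 1 := by
        rw [Nat.cast_sub (by omega)]; simp
      rw [hcast]
      have hmassF : ENNReal.ofReal c ≤ ∫⁻ x in Ico (t' - t) (t' - t + 1), F x := by
        refine (hmass f hfm t' ht'A.2).1.trans (le_of_eq ?_)
        rw [setLIntegral_Ico_shift (fun x => ENNReal.ofReal (|f x| ^ p)),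
          setLIntegral_Ico_shift (fun x => ENNReal.ofReal (|f x| ^ p))]
        congr 3 <;> ring
      calc ENNReal.ofReal c * ENNReal.ofReal (ρ (m - 1))
          ≤ (∫⁻ x in Ico (t' - t) (t' - t + 1), F x) * ENNReal.ofReal (ρ (m - 1)) := by gcongr
        _ = ∫⁻ x in Ico (t' - t) (t' - t + 1), F x * ENNReal.ofReal (ρ (m - 1)) := by
            rw [lintegral_mul_const' _ _ (by finiteness)]
        _ ≤ ∫⁻ x in Ico (t' - t) (t' - t + 1), ENNReal.ofReal C * H x := by
            refine setLIntegral_mono' measurableSet_Ico fun x hx => ?_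
            have hx1 : (1 : ℝ) ≤ x := by linarith [hx.1]
            rw [hH, indicator_of_mem (by exact hx1), ENNReal.ofReal_mul (by positivity), hF,
              mul_left_comm]
            gcongr
            exact hCρ _ (by linarith) x (by linarith [hx.1]) (by linarith [hx.2])
        _ = ENNReal.ofReal C * ∫⁻ x in Ico (t' - t) (t' - t + 1), H x :=
            lintegral_const_mul' _ _ (by finiteness)
        _ ≤ _ := by
            exact mul_le_mul' le_rfl
              (lintegral_mono_set (Ico_subset_Ico (by linarith) (by linarith)))
    have hsum : ENNReal.ofReal c * ENNReal.ofReal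
        (∑ m ∈ Finset.range K, (if n + m ∈ B then v m else 0)) ≤
        ENNReal.ofReal C * (3 * ENNReal.ofReal (ε ^ p)) := by
      rw [ENNReal.ofReal_sum_of_nonneg (fun m _ => by split_ifs <;> simp [hv0]), Finset.mul_sum]
      calc _ ≤ ∑ m ∈ Finset.range K,
              ENNReal.ofReal C * ∫⁻ x in Ico ((m : ℝ) - 1) (m + 2), H x :=
            Finset.sum_le_sum fun m _ => hterm m
        _ = ENNReal.ofReal C * ∑ m ∈ Finset.range K, ∫⁻ x in Ico ((m : ℝ) - 1) (m + 2), H x := by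
            rw [Finset.mul_sum]
        _ ≤ ENNReal.ofReal C * (3 * ∫⁻ x, H x) := by
            gcongr
            exact (ENNReal.sum_le_tsum _).trans (tsum_overlap_le H)
        _ ≤ _ := by
            gcongr
            rw [hH, lintegral_indicator measurableSet_Ici]
            exact (hmass f hfm t htA.2).2
    have h3 : (3 : ℝ≥0∞) = ENNReal.ofReal 3 := by simp
    rw [h3, ← ENNReal.ofReal_mul hc.le, ← ENNReal.ofReal_mul (by norm_num),
      ← ENNReal.ofReal_mul hC.le, ENNReal.ofReal_le_ofReal_iff (by positivity)] at hsum
    rw [le_div_iff₀ hc]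
    linarith
  have hgrow : ∀ L : ℕ, ∃ C : ℝ, 0 ≤ C ∧ ∀ a l, l ≤ L → v a ≤ C * v (a + l) := by
    intro L
    obtain ⟨C, hC, h⟩ := hρ.exists_const L
    refine ⟨C, hC.le, fun a l hl => ?_⟩
    by_cases ha : a < 2
    · have : v a = 0 := by simp only [hv, if_pos ha]
      rw [this]
      exact mul_nonneg hC.le (hv0 _)
    · have hal : ¬ a + l < 2 := by omega
      simp only [hv, if_neg ha, if_neg hal]
      have := h ((a - 1 : ℕ) : ℝ) (by positivity) l (by positivity) (by exact_mod_cast hl)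
      rwa [← Nat.cast_add, show a - 1 + l = a + l - 1 by omega] at this
  have hs := summable_of_density B hd hdB v hv0 _ hbound hgrow
  rw [← summable_nat_add_iff 2] at hs
  rw [← summable_nat_add_iff 1]
  refine hs.congr fun k => ?_
  simp [hv]

/-! ### Chaos forces integrability of the weight -/

/-- A periodic function close to `1_{[0,1)}` has the same nonzero mass on each period, and its
weighted norm therefore dominates the sum of the samples of `ρ` along the period. -/
lemma ChaoticTransLpH.integrableOn {p : ℝ} (hp : 1 ≤ p) {ρ : ℝ → ℝ} (hρ : AdmissibleH ρ)
    (h : ChaoticTransLpH p ρ) : IntegrableOn ρ (Ici 0) volume := by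
  have hp0 : 0 < p := by linarith
  obtain ⟨ε, hε, c, hc, hmass⟩ := hρ.exists_mass_bounds hp
  obtain ⟨f, ⟨hfm, hfI⟩, ⟨t, ht, hper⟩, hclose⟩ := h.2 _ (hρ.memLp_indicator hp) ε hε
  have hmassf := (hmass f hfm 0 (by simpa [TransLpCloseH] using hclose)).1
  simp only [add_zero] at hmassf
  set F : ℝ → ℝ≥0∞ := fun x => ENNReal.ofReal (|f x| ^ p) with hF
  have hFper : ∀ᵐ x ∂(volume.restrict (Ici (0 : ℝ))), F (x + t) = F x := by
    have hm : Measurable fun x => ENNReal.ofReal (|f (x + t) - f x| ^ p * ρ x) := by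
      have := hρ.1
      fun_prop
    rw [lintegral_eq_zero_iff hm] at hper
    filter_upwards [hper, ae_restrict_mem measurableSet_Ici] with x hx hx0
    have hρx := hρ.2.1 x hx0
    have h1 : |f (x + t) - f x| ^ p * ρ x ≤ 0 := by simpa using hx
    have h2 : |f (x + t) - f x| ^ p ≤ 0 := by
      by_contra hcon
      push Not at hcon
      exact absurd h1 (not_le.2 (mul_pos hcon hρx))
    have h3 : |f (x + t) - f x| = 0 := by
      by_contra hcon
      exact absurd h2 (not_le.2 (Real.rpow_pos_of_pos (by positivity) p))
    have h4 : f (x + t) = f x := by linarith [abs_eq_zero.1 h3]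
    simp only [hF, h4]
  have hblock : ∀ k : ℕ, ∫⁻ x in Ico (k * t) ((k + 1) * t), F x = ∫⁻ x in Ico 0 t, F x := by
    intro k
    induction k with
    | zero => simp
    | succ k ih =>
      rw [← ih]
      have h1 : ((k + 1 : ℕ) : ℝ) * t = k * t + t := by push_cast; ring
      have h2 : (((k + 1 : ℕ) : ℝ) + 1) * t = (k + 1) * t + t := by push_cast; ring
      rw [h1, h2, ← setLIntegral_Ico_shift]
      refine lintegral_congr_ae (ae_restrict_of_ae_restrict_of_subset ?_ hFper)
      intro x hx
      exact le_trans (by positivity) hx.1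
  set c₀ := ∫⁻ x in Ico 0 t, F x with hc₀
  -- otherwise `f` would vanish on the whole half-line
  have hc₀0 : c₀ ≠ 0 := by
    intro h0
    have hI : ∫⁻ x in Ici (0 : ℝ), F x = 0 := by
      rw [lintegral_Ici_eq_tsum ht]
      simp [hblock, h0]
    have := hmassf.trans (lintegral_mono_set (Ico_subset_Ici_self : Ico (0 : ℝ) 1 ⊆ Ici 0))
    rw [hI] at this
    have : c ≤ 0 := by simpa using this
    linarith
  obtain ⟨C, hC, hCρ⟩ := hρ.exists_const_ofReal t
  have hle : c₀ * ∑' k : ℕ, ENNReal.ofReal (ρ (k * t)) ≤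
      ENNReal.ofReal C * ∫⁻ x in Ici (0 : ℝ), ENNReal.ofReal (|f x| ^ p * ρ x) := by
    rw [lintegral_Ici_eq_tsum ht, ← ENNReal.tsum_mul_left, ← ENNReal.tsum_mul_left]
    refine ENNReal.tsum_le_tsum fun k => ?_
    rw [← hblock k, ← lintegral_mul_const' _ _ (by finiteness),
      ← lintegral_const_mul' _ _ (by finiteness)]
    refine setLIntegral_mono' measurableSet_Ico fun x hx => ?_
    rw [ENNReal.ofReal_mul (by positivity), mul_left_comm]
    gcongr
    have : ((k : ℝ) + 1) * t = k * t + t := by ring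
    exact hCρ _ (by positivity) x hx.1 (by linarith [hx.2])
  refine hρ.integrableOn_of_tsum ht fun htop => ?_
  rw [htop, ENNReal.mul_top hc₀0] at hle
  exact absurd hle (not_le.2 (ENNReal.mul_lt_top (by finiteness) hfI))

/-! ### The space as an `L^p` space of a weighted measure -/

/-- The measure `ρ(x) dx` on `[0,∞)`, regarded as a measure on `ℝ`. -/
noncomputable def weightMeasure (ρ : ℝ → ℝ) : Measure ℝ :=
  (volume.restrict (Ici 0)).withDensity fun x => ENNReal.ofReal (ρ x)

lemma lintegral_eq_eLpNorm {p : ℝ} (hp : 1 ≤ p) {ρ : ℝ → ℝ} (hρ : AdmissibleH ρ) {h : ℝ → ℝ}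
    (hh : Measurable h) :
    ∫⁻ x in Ici (0 : ℝ), ENNReal.ofReal (|h x| ^ p * ρ x) =
      eLpNorm h (ENNReal.ofReal p) (weightMeasure ρ) ^ p := by
  have hp0 : 0 < p := by linarith
  rw [eLpNorm_eq_lintegral_rpow_enorm_toReal (by simpa using hp0) (by finiteness),
    ENNReal.toReal_ofReal hp0.le, ← ENNReal.rpow_mul, one_div, inv_mul_cancel₀ hp0.ne',
    ENNReal.rpow_one, weightMeasure, lintegral_withDensity_eq_lintegral_mul _
    hρ.1.ennreal_ofReal (by fun_prop)]
  refine lintegral_congr fun x => ?_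
  rw [ENNReal.ofReal_mul (by positivity), Pi.mul_apply, mul_comm, Real.enorm_eq_ofReal_abs,
    ENNReal.ofReal_rpow_of_nonneg (abs_nonneg _) hp0.le]

lemma lintegral_le_iff_eLpNorm {p : ℝ} (hp : 1 ≤ p) {ρ : ℝ → ℝ} (hρ : AdmissibleH ρ) {h : ℝ → ℝ}
    (hh : Measurable h) {ε : ℝ} (hε : 0 < ε) :
    ∫⁻ x in Ici (0 : ℝ), ENNReal.ofReal (|h x| ^ p * ρ x) ≤ ENNReal.ofReal (ε ^ p) ↔
      eLpNorm h (ENNReal.ofReal p) (weightMeasure ρ) ≤ ENNReal.ofReal ε := by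
  rw [lintegral_eq_eLpNorm hp hρ hh, ← ENNReal.ofReal_rpow_of_pos hε,
    ENNReal.rpow_le_rpow_iff (by linarith)]

lemma memLpRhoH_iff {p : ℝ} (hp : 1 ≤ p) {ρ : ℝ → ℝ} (hρ : AdmissibleH ρ) {h : ℝ → ℝ} :
    MemLpRhoH p ρ h ↔ Measurable h ∧ MemLp h (ENNReal.ofReal p) (weightMeasure ρ) := by
  refine and_congr_right fun hh => ?_
  rw [lintegral_eq_eLpNorm hp hρ hh, ENNReal.rpow_lt_top_iff_of_pos (by linarith)]
  exact ⟨fun h => ⟨hh.aestronglyMeasurable, h⟩, fun h => h.2⟩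

lemma AdmissibleH.isFiniteMeasure {ρ : ℝ → ℝ} (hρ : AdmissibleH ρ)
    (h : IntegrableOn ρ (Ici 0) volume) : IsFiniteMeasure (weightMeasure ρ) :=
  isFiniteMeasure_withDensity (hρ.integrableOn_iff.1 h)

/-- The translations `T_s`, `0 ≤ s ≤ 1`, are uniformly bounded operators. -/
lemma exists_eLpNorm_shift_le {p : ℝ} (hp : 1 ≤ p) {ρ : ℝ → ℝ} (hρ : AdmissibleH ρ) :
    ∃ K : ℝ≥0∞, K ≠ ⊤ ∧ ∀ h : ℝ → ℝ, Measurable h → ∀ s, 0 ≤ s → s ≤ 1 →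
      eLpNorm (fun x => h (x + s)) (ENNReal.ofReal p) (weightMeasure ρ) ≤
        K * eLpNorm h (ENNReal.ofReal p) (weightMeasure ρ) := by
  have hp0 : 0 < p := by linarith
  obtain ⟨C, hC, hc⟩ := hρ.exists_const_ofReal 1
  refine ⟨ENNReal.ofReal C ^ (1 / p), by finiteness, fun h hh s hs0 hs1 => ?_⟩
  rw [← ENNReal.rpow_le_rpow_iff hp0, ENNReal.mul_rpow_of_nonneg _ _ hp0.le, ← ENNReal.rpow_mul,
    one_div, inv_mul_cancel₀ hp0.ne', ENNReal.rpow_one, ← lintegral_eq_eLpNorm hp hρ (by fun_prop),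
    ← lintegral_eq_eLpNorm hp hρ hh]
  calc ∫⁻ x in Ici (0 : ℝ), ENNReal.ofReal (|h (x + s)| ^ p * ρ x)
      ≤ ∫⁻ x in Ici (0 : ℝ), ENNReal.ofReal C * ENNReal.ofReal (|h (x + s)| ^ p * ρ (x + s)) := by
        refine setLIntegral_mono' measurableSet_Ici fun x hx => ?_
        rw [ENNReal.ofReal_mul (by positivity), ENNReal.ofReal_mul (by positivity), mul_left_comm]
        gcongr
        exact hc x hx _ (by linarith) (by linarith)
    _ = ENNReal.ofReal C * ∫⁻ x in Ici (0 : ℝ), ENNReal.ofReal (|h (x + s)| ^ p * ρ (x + s)) :=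
        lintegral_const_mul' _ _ (by finiteness)
    _ ≤ _ := by
        refine mul_le_mul' le_rfl ?_
        have := (measurePreserving_add_right volume s).setLIntegral_comp_preimage_emb
          (measurableEmbedding_addRight s) (fun y => ENNReal.ofReal (|h y| ^ p * ρ y)) (Ici s)
        have h2 : (fun x => x + s) ⁻¹' Ici s = Ici 0 := by ext; simp
        rw [h2] at this
        rw [this]
        exact lintegral_mono_set (Ici_subset_Ici.2 hs0)

/-! ### Density of periodic points -/

lemma tendsto_weightMeasure_Ici {ρ : ℝ → ℝ} [IsFiniteMeasure (weightMeasure ρ)] :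
    Tendsto (fun n : ℕ => weightMeasure ρ (Ici (n : ℝ))) atTop (𝓝 0) := by
  have h := tendsto_measure_iInter_atTop (μ := weightMeasure ρ) (s := fun n : ℕ => Ici (n : ℝ))
    (fun n => measurableSet_Ici.nullMeasurableSet)
    (fun a b hab => Ici_subset_Ici.2 (by exact_mod_cast hab)) ⟨0, by finiteness⟩
  have h0 : ⋂ n : ℕ, Ici (n : ℝ) = ∅ := by
    ext x
    simp only [mem_iInter, mem_Ici, mem_empty_iff_false, iff_false, not_forall, not_le]
    exact exists_nat_gt x
  rwa [h0, measure_empty] at h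

lemma ae_weightMeasure {ρ : ℝ → ℝ} {q : ℝ → Prop} (h : ∀ x, 0 ≤ x → q x) :
    ∀ᵐ x ∂weightMeasure ρ, q x := by
  refine (withDensity_absolutelyContinuous _ _).ae_le ?_
  filter_upwards [ae_restrict_mem measurableSet_Ici] with x hx using h x hx

/-- A compactly supported continuous function is close to its restriction to `[0, n)`, extended
periodically: both are bounded, and `[n, ∞)` has small measure. -/
lemma exists_periodic_close {p : ℝ} (hp : 1 ≤ p) {ρ : ℝ → ℝ} (hρ : AdmissibleH ρ)
    (hint : IntegrableOn ρ (Ici 0) volume) (g : ℝ → ℝ) (hg : MemLpRhoH p ρ g) (ε : ℝ)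
    (hε : 0 < ε) : ∃ f : ℝ → ℝ, MemLpRhoH p ρ f ∧
      (∃ t : ℝ, 0 < t ∧
        (∫⁻ x in Ici (0 : ℝ), ENNReal.ofReal (|f (x + t) - f x| ^ p * ρ x)) = 0) ∧
      (∫⁻ x in Ici (0 : ℝ), ENNReal.ofReal (|f x - g x| ^ p * ρ x)) ≤
        ENNReal.ofReal (ε ^ p) := by
  have hp0 : 0 < p := by linarith
  have hP0 : ENNReal.ofReal p ≠ 0 := by simpa using hp0
  have hP1 : 1 ≤ ENNReal.ofReal p := by simpa using hp
  have := hρ.isFiniteMeasure hint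
  obtain ⟨hgm, hgL⟩ := (memLpRhoH_iff hp hρ).1 hg
  obtain ⟨c, hcs, hcg, hcc, hcL⟩ := hgL.exists_hasCompactSupport_eLpNorm_sub_le (by finiteness)
    (ε := ENNReal.ofReal (ε / 2)) (by simpa using hε)
  obtain ⟨b, hb⟩ := hcc.bounded_above_of_compact_support hcs
  have hb0 : 0 ≤ b := (norm_nonneg _).trans (hb 0)
  -- the contribution of `[n, ∞)` for a function bounded by `2 b`
  have htail : Tendsto (fun n : ℕ => ENNReal.ofReal (2 * b) *
      weightMeasure ρ (Ici (n : ℝ)) ^ (1 / p)) atTop (𝓝 0) := by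
    have h1 := (tendsto_weightMeasure_Ici (ρ := ρ)).ennrpow_const (1 / p)
    rw [ENNReal.zero_rpow_of_pos (by positivity)] at h1
    have h2 := ENNReal.Tendsto.const_mul (a := ENNReal.ofReal (2 * b)) h1
      (Or.inr ENNReal.ofReal_ne_top)
    rwa [mul_zero] at h2
  obtain ⟨n, hn, hn0⟩ := ((htail.eventually_le_const (u := ENNReal.ofReal (ε / 2))
    (by simpa using hε)).and (eventually_gt_atTop 0)).exists
  have hn0' : (0 : ℝ) < n := by exact_mod_cast hn0
  set f : ℝ → ℝ := fun x => c (n * Int.fract (x / n)) with hf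
  have hfm : Measurable f := by
    have := hcc.measurable
    fun_prop
  have hfb : ∀ x, ‖f x‖ ≤ b := fun x => hb _
  refine ⟨f, (memLpRhoH_iff hp hρ).2 ⟨hfm, MemLp.of_bound hfm.aestronglyMeasurable b
    (Eventually.of_forall hfb)⟩, ⟨n, hn0', ?_⟩, ?_⟩
  · have : ∀ x, f (x + n) = f x := fun x => by
      simp only [hf]
      rw [add_div, div_self hn0'.ne', Int.fract_add_one]
    simp [this, Real.zero_rpow hp0.ne']
  · have hfg : Measurable fun x => f x - g x := hfm.sub hgm
    rw [lintegral_le_iff_eLpNorm hp hρ hfg hε]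
    have h1 : eLpNorm (fun x => f x - c x) (ENNReal.ofReal p) (weightMeasure ρ) ≤
        ENNReal.ofReal (ε / 2) := by
      refine le_trans ?_ hn
      have h2 : eLpNorm (fun x => f x - c x) (ENNReal.ofReal p) (weightMeasure ρ) ≤
          eLpNorm (indicator (Ici (n : ℝ)) fun _ => 2 * b) (ENNReal.ofReal p)
            (weightMeasure ρ) := by
        refine eLpNorm_mono_ae (ae_weightMeasure fun x hx => ?_)
        by_cases hxn : x ∈ Ici (n : ℝ)
        · rw [indicator_of_mem hxn, Real.norm_of_nonneg (by positivity : 0 ≤ 2 * b), two_mul]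
          exact (norm_sub_le _ _).trans (add_le_add (hfb x) (hb x))
        · have : Int.fract (x / n) = x / n := by
            rw [Int.fract_eq_self]
            refine ⟨by positivity, ?_⟩
            rw [div_lt_one hn0']
            exact not_le.1 hxn
          simp only [hf, this, mul_div_cancel₀ x hn0'.ne', sub_self, norm_zero]
          positivity
      refine h2.trans ?_
      rw [eLpNorm_indicator_const measurableSet_Ici hP0 (by finiteness),
        ENNReal.toReal_ofReal hp0.le, Real.enorm_eq_ofReal (by positivity)]
    have h3 : eLpNorm (fun x => c x - g x) (ENNReal.ofReal p) (weightMeasure ρ) ≤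
        ENNReal.ofReal (ε / 2) := by
      have := eLpNorm_sub_comm g c (ENNReal.ofReal p) (weightMeasure ρ)
      exact this ▸ hcg
    have h4 : (fun x => f x - g x) = (fun x => f x - c x) + fun x => c x - g x := by
      ext x; simp
    calc eLpNorm (fun x => f x - g x) (ENNReal.ofReal p) (weightMeasure ρ)
        ≤ _ := by
          rw [h4]
          exact eLpNorm_add_le (hfm.sub hcc.measurable).aestronglyMeasurable
            (hcc.measurable.sub hgm).aestronglyMeasurable hP1
      _ ≤ ENNReal.ofReal (ε / 2) + ENNReal.ofReal (ε / 2) := add_le_add h1 h3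
      _ = ENNReal.ofReal ε := by
          rw [← ENNReal.ofReal_add (by positivity) (by positivity), add_halves]

/-! ### Construction of a frequently hypercyclic function -/

/-- Left end point of the `k`-th block, of length `v₂ (k + 1)`, on the half-line. Since
`v₂ (k !) = ∑ l < k, v₂ (l + 1)`, the starting points of two blocks differ by at least the sum of
the two lengths plus one. -/
def blockPos (k : ℕ) : ℕ :=
  k + 2 * padicValNat 2 (k.factorial) + padicValNat 2 (k + 1)

lemma padicValNat_factorial_succ' (k : ℕ) : padicValNat 2 (k + 1).factorial =
    padicValNat 2 (k + 1) + padicValNat 2 k.factorial := by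
  rw [Nat.factorial_succ, padicValNat.mul (by omega) (Nat.factorial_ne_zero k)]

/-- The starting points of two blocks differ by more than the sum of the two lengths. -/
lemma blockPos_gap {k l : ℕ} (h : k < l) :
    blockPos k + padicValNat 2 (k + 1) + padicValNat 2 (l + 1) + 1 ≤ blockPos l := by
  have hmono : padicValNat 2 (k + 1).factorial ≤ padicValNat 2 l.factorial :=
    (monotone_nat_of_le_succ fun n => by
      rw [padicValNat_factorial_succ']; exact Nat.le_add_left _ _ :
      Monotone fun n : ℕ => padicValNat 2 n.factorial) h
  rw [padicValNat_factorial_succ'] at hmono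
  unfold blockPos
  omega

/-- By Legendre's formula the blocks have bounded average length. -/
lemma blockPos_le (k : ℕ) : blockPos k ≤ 4 * k + 1 := by
  have key : ∀ n : ℕ, padicValNat 2 n.factorial ≤ n := fun n => by
    have := sub_one_mul_padicValNat_factorial (p := 2) n
    omega
  have h1 := key k
  have h2 := key (k + 1)
  rw [padicValNat_factorial_succ'] at h2
  unfold blockPos
  omega

/-- The function whose restriction to the `k`-th block is the translate of `G (v₂ (k + 1))`. At `x`
only the blocks with index at most `⌊x⌋₊` can contribute, so that a finite sum suffices. -/
noncomputable def blockSum (G : ℕ → ℝ → ℝ) (x : ℝ) : ℝ :=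
  ∑ k ∈ Finset.range (⌊x⌋₊ + 1), G (padicValNat 2 (k + 1)) (x - blockPos k)

lemma measurable_blockSum {G : ℕ → ℝ → ℝ} (hG : ∀ a, Measurable (G a)) :
    Measurable (blockSum G) := by
  have h : Measurable fun z : ℕ × ℝ =>
      ∑ k ∈ Finset.range (z.1 + 1), G (padicValNat 2 (k + 1)) (z.2 - blockPos k) := by
    refine measurable_from_prod_countable_right fun n => ?_
    exact Finset.measurable_fun_sum (Finset.range (n + 1)) fun k _ =>
      (hG (padicValNat 2 (k + 1))).comp (measurable_id.sub_const (blockPos k : ℝ))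
  exact h.comp (Nat.measurable_floor.prodMk measurable_id)

/-- On a block the sum has a single nonzero term. -/
lemma blockSum_on_block {G : ℕ → ℝ → ℝ} (hG : ∀ a x, G a x ≠ 0 → 0 ≤ x ∧ x ≤ a) (k : ℕ) {y : ℝ}
    (h0 : blockPos k ≤ y) (h1 : y ≤ blockPos k + padicValNat 2 (k + 1)) :
    blockSum G y = G (padicValNat 2 (k + 1)) (y - blockPos k) := by
  refine Finset.sum_eq_single k (fun l _ hlk => ?_) fun hk => ?_
  · by_contra hne
    obtain ⟨h2, h3⟩ := hG _ _ hne
    rcases lt_or_gt_of_ne hlk with h | h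
    · have : (blockPos l + padicValNat 2 (l + 1) + padicValNat 2 (k + 1) + 1 : ℝ) ≤ blockPos k := by
        exact_mod_cast blockPos_gap h
      have h4 : (0 : ℝ) ≤ padicValNat 2 (k + 1) := Nat.cast_nonneg _
      linarith
    · have : (blockPos k + padicValNat 2 (k + 1) + padicValNat 2 (l + 1) + 1 : ℝ) ≤ blockPos l := by
        exact_mod_cast blockPos_gap h
      have h4 : (0 : ℝ) ≤ padicValNat 2 (l + 1) := Nat.cast_nonneg _
      linarith
  · exfalso
    apply hk
    rw [Finset.mem_range, Nat.lt_succ_iff]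
    refine Nat.le_floor (le_trans ?_ h0)
    have : k ≤ blockPos k := by unfold blockPos; omega
    exact_mod_cast this

lemma blockSum_eq_zero_or {G : ℕ → ℝ → ℝ} (hG : ∀ a x, G a x ≠ 0 → 0 ≤ x ∧ x ≤ a) (y : ℝ) :
    blockSum G y = 0 ∨ ∃ k : ℕ, blockPos k ≤ y ∧ y ≤ blockPos k + padicValNat 2 (k + 1) := by
  by_contra! h
  obtain ⟨k, -, hk⟩ := Finset.exists_ne_zero_of_sum_ne_zero h.1
  obtain ⟨h1, h2⟩ := hG _ _ hk
  exact absurd (h.2 k (by linarith)) (by linarith)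

/-- Seen from the beginning of the `k`-th block, the sum differs from the block function only
beyond the block, and a block function `G a` occurs there only beyond the point `a`. Any monotone
function `ψ` dominating each `G a` at `a` therefore dominates the error. -/
lemma blockSum_error {G : ℕ → ℝ → ℝ} (hG : ∀ a x, G a x ≠ 0 → 0 ≤ x ∧ x ≤ a) {p : ℝ} (hp : 0 < p)
    {ψ : ℝ → ℝ≥0∞} (hψ : Monotone ψ) (hGψ : ∀ (a : ℕ) x, ‖G a x‖ₑ ^ p ≤ ψ a) (k : ℕ) {x : ℝ}
    (hx : 0 ≤ x) :
    ‖blockSum G (x + blockPos k) - G (padicValNat 2 (k + 1)) x‖ₑ ^ p ≤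
      indicator (Ici ((padicValNat 2 (k + 1) : ℕ) : ℝ)) ψ x := by
  rcases le_or_gt x (padicValNat 2 (k + 1)) with h | h
  · rw [blockSum_on_block hG k (by linarith) (by linarith)]
    simp [hp]
  · have h0 : G (padicValNat 2 (k + 1)) x = 0 := by
      by_contra hne
      exact absurd (hG _ _ hne).2 (not_le.2 h)
    rw [h0, sub_zero, indicator_of_mem (by exact h.le)]
    rcases blockSum_eq_zero_or hG (x + blockPos k) with h1 | ⟨l, hl1, hl2⟩
    · simp [h1, hp]
    · rw [blockSum_on_block hG l hl1 hl2]
      refine (hGψ _ _).trans (hψ ?_)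
      rcases lt_trichotomy l k with hlk | rfl | hlk
      · have : (blockPos l + padicValNat 2 (l + 1) + padicValNat 2 (k + 1) + 1 : ℝ) ≤
            blockPos k := by
          exact_mod_cast blockPos_gap hlk
        have h4 : (0 : ℝ) ≤ padicValNat 2 (k + 1) := Nat.cast_nonneg _
        linarith
      · exact h.le
      · have : (blockPos k + padicValNat 2 (k + 1) + padicValNat 2 (l + 1) + 1 : ℝ) ≤
            blockPos l := by
          exact_mod_cast blockPos_gap hlk
        have h4 : (0 : ℝ) ≤ padicValNat 2 (k + 1) := Nat.cast_nonneg _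
        linarith

/-- A finite measure integrates some monotone function tending to infinity. -/
lemma exists_monotone_integrable {ρ : ℝ → ℝ} [IsFiniteMeasure (weightMeasure ρ)] :
    ∃ ψ : ℝ → ℝ≥0∞, Monotone ψ ∧ Tendsto ψ atTop (𝓝 ⊤) ∧
      ∫⁻ x, ψ x ∂weightMeasure ρ ≠ ⊤ := by
  have h1 : ∀ i : ℕ, ∃ n : ℕ, weightMeasure ρ (Ici (n : ℝ)) ≤ 2⁻¹ ^ i := fun i =>
    ((tendsto_weightMeasure_Ici (ρ := ρ)).eventually_le_const
      (ENNReal.pow_pos (by norm_num) i)).exists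
  choose X hX using h1
  refine ⟨fun x => ∑' i : ℕ, indicator (Ici (X i : ℝ)) 1 x, fun x y hxy => ?_, ?_, ?_⟩
  · refine ENNReal.tsum_le_tsum fun i => ?_
    by_cases h : x ∈ Ici (X i : ℝ)
    · rw [indicator_of_mem h,
        indicator_of_mem (show y ∈ Ici (X i : ℝ) from le_trans (mem_Ici.1 h) hxy)]
      exact le_rfl
    · rw [indicator_of_notMem h]; exact bot_le
  · rw [ENNReal.tendsto_nhds_top_iff_nat]
    intro n
    have h2 : ∀ᶠ x : ℝ in atTop, ∀ i ∈ Finset.range (n + 1), (X i : ℝ) ≤ x := by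
      rw [Finset.eventually_all]
      exact fun i _ => eventually_ge_atTop _
    filter_upwards [h2] with x hx
    refine lt_of_lt_of_le ?_ (ENNReal.sum_le_tsum (Finset.range (n + 1)))
    have : ∑ i ∈ Finset.range (n + 1), indicator (Ici (X i : ℝ)) (1 : ℝ → ℝ≥0∞) x =
        ∑ i ∈ Finset.range (n + 1), 1 :=
      Finset.sum_congr rfl fun i hi => by rw [indicator_of_mem (by exact hx i hi)]; rfl
    rw [this]
    simp only [Finset.sum_const, Finset.card_range, nsmul_eq_mul, mul_one]
    exact_mod_cast Nat.lt_succ_self n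
  · rw [lintegral_tsum fun i => (measurable_one.indicator measurableSet_Ici).aemeasurable]
    refine ne_top_of_le_ne_top (b := ∑' i : ℕ, (2⁻¹ : ℝ≥0∞) ^ i) ?_
      (ENNReal.tsum_le_tsum fun i => ?_)
    · rw [ENNReal.tsum_geometric]; simp
    · rw [lintegral_indicator_one measurableSet_Ici]
      exact hX i

open Classical in
/-- Truncation of `u` to `[0, a]` and to the values with `|u|^p` at most `ψ a`. -/
noncomputable def truncate (p : ℝ) (ψ : ℝ → ℝ≥0∞) (u : ℝ → ℝ) (a : ℕ) (x : ℝ) : ℝ :=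
  if 0 ≤ x ∧ x ≤ a ∧ ‖u x‖ₑ ^ p ≤ ψ a then u x else 0

lemma measurable_truncate (p : ℝ) (ψ : ℝ → ℝ≥0∞) {u : ℝ → ℝ} (hu : Measurable u) (a : ℕ) :
    Measurable (truncate p ψ u a) := by
  refine Measurable.ite ?_ hu measurable_const
  have h1 : MeasurableSet {x : ℝ | 0 ≤ x} := measurableSet_Ici
  have h2 : MeasurableSet {x : ℝ | x ≤ a} := measurableSet_Iic
  have h3 : MeasurableSet {x : ℝ | ‖u x‖ₑ ^ p ≤ ψ a} :=
    measurableSet_le (by fun_prop) measurable_const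
  exact h1.inter (h2.inter h3)

lemma tendsto_truncate {p : ℝ} (hp : 1 ≤ p) {ρ : ℝ → ℝ} {ψ : ℝ → ℝ≥0∞}
    (hψ : Tendsto ψ atTop (𝓝 ⊤)) {u : ℝ → ℝ} (hu : Measurable u)
    (huL : MemLp u (ENNReal.ofReal p) (weightMeasure ρ)) :
    Tendsto (fun a : ℕ => eLpNorm (fun x => truncate p ψ u a x - u x) (ENNReal.ofReal p)
      (weightMeasure ρ)) atTop (𝓝 0) := by
  have hp0 : 0 < p := by linarith
  have hP0 : ENNReal.ofReal p ≠ 0 := by simpa using hp0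
  simp only [eLpNorm_eq_lintegral_rpow_enorm_toReal hP0 ENNReal.ofReal_ne_top,
    ENNReal.toReal_ofReal hp0.le]
  have h1 : Tendsto (fun a : ℕ => ∫⁻ x, ‖truncate p ψ u a x - u x‖ₑ ^ p ∂weightMeasure ρ) atTop
      (𝓝 (∫⁻ _, 0 ∂weightMeasure ρ)) := by
    refine tendsto_lintegral_of_dominated_convergence (fun x => ‖u x‖ₑ ^ p) (fun a => ?_)
      (fun a => Eventually.of_forall fun x => ?_) ?_ (ae_weightMeasure fun x hx => ?_)
    · have := measurable_truncate p ψ hu a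
      fun_prop
    · simp only [truncate]
      split_ifs <;> simp [hp0]
    · have := huL.2
      rw [eLpNorm_lt_top_iff_lintegral_rpow_enorm_lt_top hP0 ENNReal.ofReal_ne_top,
        ENNReal.toReal_ofReal hp0.le] at this
      exact this.ne
    · have h2 : ∀ᶠ a : ℕ in atTop, ‖u x‖ₑ ^ p ≤ ψ a :=
        tendsto_natCast_atTop_atTop.eventually
          (hψ.eventually_const_le (by finiteness : ‖u x‖ₑ ^ p < ⊤))
      refine tendsto_const_nhds.congr' ?_
      filter_upwards [h2, tendsto_natCast_atTop_atTop.eventually (eventually_ge_atTop x)]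
        with a ha hxa
      rw [truncate, if_pos ⟨hx, hxa, ha⟩]
      simp [hp0]
  rw [lintegral_zero] at h1
  have h2 := h1.ennrpow_const (1 / p)
  rwa [ENNReal.zero_rpow_of_pos (by positivity)] at h2

/-- Separability of the space, in terms of functions. -/
lemma exists_dense_seq {p : ℝ} (hp : 1 ≤ p) {ρ : ℝ → ℝ} [IsFiniteMeasure (weightMeasure ρ)] :
    ∃ u : ℕ → ℝ → ℝ, (∀ i, Measurable (u i)) ∧
      (∀ i, MemLp (u i) (ENNReal.ofReal p) (weightMeasure ρ)) ∧
      ∀ g, MemLp g (ENNReal.ofReal p) (weightMeasure ρ) → ∀ e : ℝ≥0∞, e ≠ 0 →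
        ∃ i, eLpNorm (fun x => u i x - g x) (ENNReal.ofReal p) (weightMeasure ρ) ≤ e := by
  have : Fact (1 ≤ ENNReal.ofReal p) := ⟨by simpa using hp⟩
  have : Fact (ENNReal.ofReal p ≠ ⊤) := ⟨by finiteness⟩
  set D := TopologicalSpace.denseSeq (Lp ℝ (ENNReal.ofReal p) (weightMeasure ρ)) with hD
  refine ⟨fun i => D i, fun i => (Lp.stronglyMeasurable _).measurable, fun i => Lp.memLp _,
    fun g hg e he => ?_⟩
  obtain ⟨i, hi⟩ := (TopologicalSpace.denseRange_denseSeq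
    (Lp ℝ (ENNReal.ofReal p) (weightMeasure ρ))).exists_mem_open
    (Metric.isOpen_eball (x := hg.toLp g) (ε := e)) ⟨_, Metric.mem_eball_self (pos_iff_ne_zero.2 he)⟩
  refine ⟨i, ?_⟩
  rw [Metric.mem_eball, Lp.edist_def] at hi
  refine le_trans (le_of_eq (eLpNorm_congr_ae ?_)) hi.le
  filter_upwards [hg.coeFn_toLp] with x hx
  simp [hx, hD]

/-- A set containing, for every block of length `a`, an interval of length `η` at the beginning of
the block has positive lower density, since the beginnings of these blocks have bounded average spacing. -/
lemma ldensR_pos_of_blocks {S : Set ℝ} (a : ℕ) {η : ℝ} (hη : 0 < η) (hη1 : η < 1)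
    (hS : ∀ k, padicValNat 2 (k + 1) = a → ∀ s, 0 ≤ s → s ≤ η → (blockPos k + s : ℝ) ∈ S) :
    0 < ldensR S := by
  -- `κ q` is the index of the `q`-th block of length `a`
  set κ : ℕ → ℕ := fun q => 2 ^ a * (2 * q + 1) - 1 with hκ
  have hA : 0 < 2 ^ a := by positivity
  have hκ1 : ∀ q, κ q + 1 = 2 ^ a * (2 * q + 1) := fun q =>
    Nat.sub_add_cancel (Nat.mul_pos hA (by omega))
  have hκa : ∀ q, padicValNat 2 (κ q + 1) = a := fun q => by
    rw [hκ1, padicValNat.mul hA.ne' (by omega), padicValNat.prime_pow,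
      padicValNat.eq_zero_of_not_dvd (by omega), add_zero]
  have hκlt : ∀ {q r : ℕ}, q < r → κ q < κ r := fun {q r} hqr => by
    have : 2 ^ a * (2 * q + 1) < 2 ^ a * (2 * r + 1) := Nat.mul_lt_mul_of_pos_left (by omega) hA
    have := hκ1 q
    have := hκ1 r
    omega
  have hsep : ∀ {q r : ℕ}, q < r → (blockPos (κ q) + 1 : ℝ) ≤ blockPos (κ r) := fun hqr => by
    have := blockPos_gap (hκlt hqr)
    exact_mod_cast (by omega : blockPos (κ _) + 1 ≤ blockPos (κ _))
  have hup : ∀ q, (blockPos (κ q) + 1 : ℝ) ≤ 8 * 2 ^ a * (q + 1) := fun q => by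
    have h1 := blockPos_le (κ q)
    have h2 := hκ1 q
    have h3 : blockPos (κ q) + 1 ≤ 8 * 2 ^ a * (q + 1) := by nlinarith
    exact_mod_cast h3
  have hfin : ∀ N : ℝ, volume (S ∩ Icc 0 N) ≤ ENNReal.ofReal N := fun N => by
    refine (measure_mono inter_subset_right).trans ?_
    simp
  have hA' : (0 : ℝ) < 2 ^ a := by positivity
  refine lt_of_lt_of_le (show 0 < η / (16 * 2 ^ a) by positivity) (le_liminf_of_le ?_ ?_)
  · refine IsBoundedUnder.isCoboundedUnder_ge ⟨1, ?_⟩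
    rw [eventually_map]
    filter_upwards [eventually_gt_atTop 0] with N hN
    rw [div_le_one hN]
    exact ENNReal.toReal_le_of_le_ofReal hN.le (hfin N)
  · filter_upwards [eventually_ge_atTop (16 * 2 ^ a : ℝ)] with N hN
    have hN0 : 0 < N := lt_of_lt_of_le (by positivity) hN
    set Q : ℕ := ⌊N / (8 * 2 ^ a)⌋₊ with hQ
    have hQ1 : (Q : ℝ) * (8 * 2 ^ a) ≤ N := by
      rw [← le_div_iff₀ (by positivity)]
      exact Nat.floor_le (by positivity)
    have hQ2 : N ≤ Q * (16 * 2 ^ a) := by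
      have h1 := Nat.lt_floor_add_one (N / (8 * 2 ^ a))
      rw [← hQ, div_lt_iff₀ (by positivity)] at h1
      linarith
    have hsub : (⋃ q ∈ Finset.range Q, Icc (blockPos (κ q) : ℝ) (blockPos (κ q) + η)) ⊆
        S ∩ Icc 0 N := by
      intro y hy
      simp only [mem_iUnion, Finset.mem_range] at hy
      obtain ⟨q, hq, hy0, hy1⟩ := hy
      refine ⟨?_, (Nat.cast_nonneg _).trans hy0, ?_⟩
      · have := hS (κ q) (hκa q) (y - blockPos (κ q)) (by linarith) (by linarith)
        rwa [add_sub_cancel] at this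
      · have h1 : (q + 1 : ℝ) ≤ Q := by exact_mod_cast hq
        have h2 := hup q
        nlinarith
    have hvol : ENNReal.ofReal (Q * η) ≤ volume (S ∩ Icc 0 N) := by
      refine le_trans (le_of_eq ?_) (measure_mono hsub)
      rw [measure_biUnion_finset _ fun _ _ => measurableSet_Icc]
      · simp [ENNReal.ofReal_mul]
      · intro q _ r _ hqr
        refine Set.disjoint_left.2 fun y hy hy' => ?_
        rcases lt_or_gt_of_ne hqr with h | h
        · linarith [hsep h, hy.2, hy'.1]
        · linarith [hsep h, hy'.2, hy.1]
    have hvol' : Q * η ≤ (volume (S ∩ Icc 0 N)).toReal :=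
      (ENNReal.ofReal_le_iff_le_toReal (ne_top_of_le_ne_top (by finiteness) (hfin N))).1 hvol
    rw [div_le_div_iff₀ (by positivity) hN0]
    nlinarith

/-- The translate of the block sum to the beginning of a block of length `a` is close to `G a`, up
to a tail of the integral of `ψ`. -/
lemma eLpNorm_blockSum_sub_le {G : ℕ → ℝ → ℝ} (hG : ∀ a x, G a x ≠ 0 → 0 ≤ x ∧ x ≤ a) {p : ℝ}
    (hp : 1 ≤ p) {ρ : ℝ → ℝ} {ψ : ℝ → ℝ≥0∞} (hψ : Monotone ψ)
    (hGψ : ∀ (a : ℕ) x, ‖G a x‖ₑ ^ p ≤ ψ a) (k : ℕ) :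
    eLpNorm (fun x => blockSum G (x + blockPos k) - G (padicValNat 2 (k + 1)) x)
      (ENNReal.ofReal p) (weightMeasure ρ) ≤
      (∫⁻ x in Ici ((padicValNat 2 (k + 1) : ℕ) : ℝ), ψ x ∂weightMeasure ρ) ^ (1 / p) := by
  have hp0 : 0 < p := by linarith
  rw [eLpNorm_eq_lintegral_rpow_enorm_toReal (by simpa using hp0) ENNReal.ofReal_ne_top,
    ENNReal.toReal_ofReal hp0.le, ← lintegral_indicator measurableSet_Ici]
  gcongr ?_ ^ _
  exact lintegral_mono_ae (ae_weightMeasure fun x hx => blockSum_error hG hp0 hψ hGψ k hx)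

/-- A continuous function with compact support moves little under short translations. -/
lemma exists_eLpNorm_translate_sub_le {p : ℝ} {ρ : ℝ → ℝ} {c : ℝ → ℝ}
    (hcc : Continuous c) (hcs : HasCompactSupport c) {e : ℝ} (he : 0 < e) :
    ∃ η, 0 < η ∧ η < 1 ∧ ∀ s, 0 ≤ s → s ≤ η →
      eLpNorm (fun x => c (x + s) - c x) (ENNReal.ofReal p) (weightMeasure ρ) ≤
        weightMeasure ρ univ ^ (ENNReal.ofReal p).toReal⁻¹ * ENNReal.ofReal e := by
  obtain ⟨δ, hδ, h⟩ := Metric.uniformContinuous_iff.1 (hcs.uniformContinuous_of_continuous hcc)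
    e he
  refine ⟨min (δ / 2) 2⁻¹, by positivity, (min_le_right _ _).trans_lt (by norm_num),
    fun s hs0 hs => eLpNorm_le_of_ae_bound (Eventually.of_forall fun x => ?_)⟩
  have := h (a := x + s) (b := x) (by
    rw [Real.dist_eq, add_sub_cancel_left, abs_of_nonneg hs0]
    linarith [min_le_left (δ / 2) 2⁻¹])
  exact this.le

/-- The block sum of truncations of a dense sequence is frequently hypercyclic: near the beginning
of every block with a suitable length `a` its translate approximates a prescribed function `g`. -/
lemma FHTransLpH.of_integrableOn {p : ℝ} (hp : 1 ≤ p) {ρ : ℝ → ℝ} (hρ : AdmissibleH ρ)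
    (hint : IntegrableOn ρ (Ici 0) volume) : FHTransLpH p ρ := by
  have hp0 : 0 < p := by linarith
  have hP1 : 1 ≤ ENNReal.ofReal p := by simpa using hp
  have := hρ.isFiniteMeasure hint
  obtain ⟨ψ, hψm, hψt, hψi⟩ := exists_monotone_integrable (ρ := ρ)
  obtain ⟨u, hum, huL, hud⟩ := exists_dense_seq hp (ρ := ρ)
  -- every `u i` is truncated at infinitely many levels `a`
  set G : ℕ → ℝ → ℝ := fun a => truncate p ψ (u (Nat.unpair a).1) a with hGdef
  have hGm : ∀ a, Measurable (G a) := fun a => measurable_truncate _ _ (hum _) _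
  have hGs : ∀ a x, G a x ≠ 0 → 0 ≤ x ∧ x ≤ a := fun a x hx => by
    simp only [hGdef, truncate, ne_eq, ite_eq_right_iff, Classical.not_imp] at hx
    exact ⟨hx.1.1, hx.1.2.1⟩
  have hGψ : ∀ (a : ℕ) x, ‖G a x‖ₑ ^ p ≤ ψ a := fun a x => by
    simp only [hGdef, truncate]
    split_ifs with h
    · exact h.2.2
    · simp [hp0]
  have hfm := measurable_blockSum hGm
  have hG0 : MemLp (G 0) (ENNReal.ofReal p) (weightMeasure ρ) :=
    (huL (Nat.unpair 0).1).mono (hGm 0).aestronglyMeasurable (Eventually.of_forall fun x => by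
      simp only [hGdef, truncate]
      split_ifs <;> simp)
  have hfL : MemLp (blockSum G) (ENNReal.ofReal p) (weightMeasure ρ) := by
    have h1 : MemLp (fun x => blockSum G x - G 0 x) (ENNReal.ofReal p) (weightMeasure ρ) := by
      refine ⟨(hfm.sub (hGm 0)).aestronglyMeasurable, ?_⟩
      have h2 := eLpNorm_blockSum_sub_le hGs hp (ρ := ρ) hψm hGψ 0
      have h3 : blockPos 0 = 0 := by simp [blockPos]
      simp only [zero_add, padicValNat_one_right, h3, Nat.cast_zero, add_zero] at h2
      refine h2.trans_lt (ENNReal.rpow_lt_top_of_nonneg (by positivity) ?_)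
      exact ne_top_of_le_ne_top hψi (setLIntegral_le_lintegral _ _)
    have h2 := h1.add hG0
    have h3 : (fun x => blockSum G x - G 0 x) + G 0 = blockSum G := by ext x; simp
    rwa [h3] at h2
  refine ⟨blockSum G, (memLpRhoH_iff hp hρ).2 ⟨hfm, hfL⟩, fun g hg ε hε => ?_⟩
  obtain ⟨hgm, hgL⟩ := (memLpRhoH_iff hp hρ).1 hg
  obtain ⟨K, hK, hKs⟩ := exists_eLpNorm_shift_le hp hρ
  set B := weightMeasure ρ univ ^ (ENNReal.ofReal p).toReal⁻¹ with hB
  have hBt : B ≠ ⊤ := by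
    rw [hB]; finiteness
  -- three errors occur before a translation by `s ≤ 1`, one is uniform and one is plain
  obtain ⟨e, he, hee⟩ : ∃ e : ℝ, 0 < e ∧ (3 * K + B + 1) * ENNReal.ofReal e ≤ ENNReal.ofReal ε := by
    have hC : 3 * K + B + 1 ≠ ⊤ := by finiteness
    have hC0 : 0 < (3 * K + B + 1).toReal := ENNReal.toReal_pos (by simp) hC
    refine ⟨ε / (3 * K + B + 1).toReal, by positivity, ?_⟩
    rw [ENNReal.ofReal_div_of_pos hC0, ENNReal.ofReal_toReal hC]
    exact ENNReal.mul_div_le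
  have he' : ENNReal.ofReal e ≠ 0 := by simpa using he
  obtain ⟨c, hcs, hcg, hcc, hcL⟩ := hgL.exists_hasCompactSupport_eLpNorm_sub_le (by finiteness) he'
  have hcm := hcc.measurable
  obtain ⟨η, hη, hη1, hcη⟩ := exists_eLpNorm_translate_sub_le (p := p) (ρ := ρ) hcc hcs he
  obtain ⟨i, hi⟩ := hud c hcL _ he'
  have htail : Tendsto (fun a : ℕ => (∫⁻ x in Ici (a : ℝ), ψ x ∂weightMeasure ρ) ^ (1 / p)) atTop
      (𝓝 0) := by
    have h1 := tendsto_setLIntegral_zero hψi (tendsto_weightMeasure_Ici (ρ := ρ))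
    have h2 := h1.ennrpow_const (1 / p)
    rwa [ENNReal.zero_rpow_of_pos (by positivity)] at h2
  obtain ⟨b, hb1, hb2⟩ := ((tendsto_atTop_mono (fun b => Nat.right_le_pair i b) tendsto_id).eventually
    ((htail.eventually_le_const (pos_iff_ne_zero.2 he')).and
      ((tendsto_truncate hp hψt (hum i) (huL i)).eventually_le_const
        (pos_iff_ne_zero.2 he')))).exists
  set a := Nat.pair i b with ha
  have hGa : G a = truncate p ψ (u i) a := by simp [hGdef, ha]
  rw [← hGa] at hb2
  refine ldensR_pos_of_blocks a hη hη1 fun k hk s hs0 hs => ⟨by positivity, ?_⟩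
  have hmeas : Measurable fun x => blockSum G (x + (blockPos k + s)) - g x := by fun_prop
  rw [TransLpCloseH, lintegral_le_iff_eLpNorm hp hρ hmeas hε]
  have hshift : eLpNorm (fun x => blockSum G (x + blockPos k) - c x) (ENNReal.ofReal p)
      (weightMeasure ρ) ≤ 3 * ENNReal.ofReal e := by
    have h1 := eLpNorm_blockSum_sub_le hGs hp (ρ := ρ) hψm hGψ k
    rw [hk] at h1
    have h2 : (fun x => blockSum G (x + blockPos k) - c x) =
        ((fun x => blockSum G (x + blockPos k) - G a x) + fun x => G a x - u i x) +
          fun x => u i x - c x := by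
      ext x; simp
    have := hum i
    have := hGm a
    rw [h2]
    calc _ ≤ (ENNReal.ofReal e + ENNReal.ofReal e) + ENNReal.ofReal e := by
          refine (eLpNorm_add_le (by fun_prop) (by fun_prop) hP1).trans (add_le_add ?_ hi)
          exact (eLpNorm_add_le (by fun_prop) (by fun_prop) hP1).trans
            (add_le_add (h1.trans hb1) hb2)
      _ = _ := by ring
  have hsplit : (fun x => blockSum G (x + (blockPos k + s)) - g x) =
      ((fun x => blockSum G (x + s + blockPos k) - c (x + s)) + fun x => c (x + s) - c x) +
        fun x => c x - g x := by
    ext x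
    simp only [Pi.add_apply, sub_add_sub_cancel]
    rw [add_assoc, add_comm s]
  rw [hsplit]
  have hcg' : eLpNorm (fun x => c x - g x) (ENNReal.ofReal p) (weightMeasure ρ) ≤
      ENNReal.ofReal e :=
    (eLpNorm_sub_comm g c (ENNReal.ofReal p) (weightMeasure ρ)) ▸ hcg
  have hKs' := hKs (fun x => blockSum G (x + blockPos k) - c x) (by fun_prop) s hs0
    (hs.trans hη1.le)
  calc _ ≤ (K * (3 * ENNReal.ofReal e) + B * ENNReal.ofReal e) + ENNReal.ofReal e := by
        refine (eLpNorm_add_le (by fun_prop) (by fun_prop) hP1).trans (add_le_add ?_ hcg')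
        refine (eLpNorm_add_le (by fun_prop) (by fun_prop) hP1).trans
          (add_le_add (hKs'.trans ?_) (hcη s hs0 hs))
        gcongr
    _ = (3 * K + B + 1) * ENNReal.ofReal e := by ring
    _ ≤ _ := hee

/-! ### The equivalences -/

lemma ChaoticTransLpH.of_integrableOn {p : ℝ} (hp : 1 ≤ p) {ρ : ℝ → ℝ} (hρ : AdmissibleH ρ)
    (hint : IntegrableOn ρ (Ici 0) volume) : ChaoticTransLpH p ρ := by
  obtain ⟨f, hf, hfd⟩ := FHTransLpH.of_integrableOn hp hρ hint
  refine ⟨⟨f, hf, fun g hg ε hε => ?_⟩, exists_periodic_close hp hρ hint⟩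
  -- the empty set has lower density zero
  by_contra! h
  have h0 : {t : ℝ | 0 ≤ t ∧ TransLpCloseH p ρ f g t ε} = ∅ :=
    eq_empty_of_forall_notMem fun t ht => h t ht.1 ht.2
  have h1 := hfd g hg ε hε
  rw [h0] at h1
  simp [ldensR] at h1

/-- For `1 ≤ p < ∞` and `ρ` an admissible weight function on `[0,∞)`, the
following are equivalent: (1) the translation semigroup is frequently hypercyclic on
`L_p^ρ([0,∞))`; (2) `Σ_{k∈ℕ} ρ(k) < ∞`; (3) `∫_0^∞ ρ(t) dt < ∞`; (4) the translation
semigroup is chaotic on `L_p^ρ([0,∞))`. -/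
theorem translation_freqHypercyclic_tfae_LpHalfLine
    (p : ℝ) (hp : 1 ≤ p) (ρ : ℝ → ℝ) (hρ : AdmissibleH ρ) :
    (FHTransLpH p ρ ↔ Summable (fun k : ℕ => ρ (k : ℝ))) ∧
    (FHTransLpH p ρ ↔ IntegrableOn ρ (Set.Ici 0) volume) ∧
    (FHTransLpH p ρ ↔ ChaoticTransLpH p ρ) := by
  have key : FHTransLpH p ρ ↔ IntegrableOn ρ (Set.Ici 0) volume :=
    ⟨fun h => hρ.summable_iff_integrableOn.1 (h.summable hp hρ), .of_integrableOn hp hρ⟩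
  exact ⟨key.trans hρ.summable_iff_integrableOn.symm, key,
    key.trans ⟨.of_integrableOn hp hρ, fun h => h.integrableOn hp hρ⟩⟩
end

section
/- Let ρ be an admissible weight function on ℝ with sup_{k∈ℤ} ρ(k+1)/ρ(k) < ∞, and set w_k = ρ(k)/ρ(k+1) for k ∈ ℤ. Then the weighted backward shift B_w, defined on c₀(ℤ) by B_w[(x_k)_{k∈ℤ}] = (w_k x_{k+1})_{k∈ℤ}, is frequently hypercyclic on c₀(ℤ) if and only if the translation semigroup (T_t)_{t≥0} is frequently hypercyclic on C₀^ρ(ℝ). -/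
/-!
Up to a constant factor, `ρ` does not change over distances at most `1` (`exists_comparison`). Both
frequent hypercyclicity properties are equivalent to that of the single translation `T₁` on
`C₀^ρ(ℝ)`. From `T₁` one passes to `B_w` by restricting a function to the integers
(`FHUnitTranslation.fhBwShift`), and to the semigroup by strong continuity
(`FHUnitTranslation.fhTransC0`).

The converses cannot be obtained by sampling alone: a sequence carries too little information, and
the visit times of a semigroup orbit need not be close to integers. They go through an intermediate
property that is insensitive to both defects (`HasBlocks`): there is a sequence `v` with
`v(k) ρ(k) → 0` which frequently shows blocks of any prescribed height and radius, surrounded by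
values that are tiny with respect to the recentred weight. Such a `v` is read off from a frequently
hypercyclic vector of either system, using only visits to large plateaus of constant height.

Given `v`, take a countable dense family `h p` of compactly supported functions, and choose heights
`A p ≥ sup |h p|` that are pairwise more than `2` apart, with radii covering the supports. Blocks
belonging to different `p` are then automatically disjoint, because a common point would have
absolute values in two disjoint height ranges; blocks belonging to the same `p` are disjoint except
for neighbouring positions, which are thinned out. Placing a copy of `h p` on each `p`-block gives a
continuous function `f` with `|f(x)| ≤ |v(⌊x⌋)|`. Hence `f ∈ C₀^ρ(ℝ)`, and whenever `n` is the
centre of a `p`-block, `T_n f` equals `h p` on the block and is dominated by the tiny values of `v`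
elsewhere (`HasBlocks.fhUnitTranslation`).
-/

open Filter MeasureTheory

/-- An admissible weight function on ℝ. -/
def Admissible (ρ : ℝ → ℝ) : Prop :=
  Measurable ρ ∧ (∀ x, 0 < ρ x) ∧
    ∃ M : ℝ, 1 ≤ M ∧ ∃ ω : ℝ, ∀ τ : ℝ, ∀ t : ℝ, 0 < t →
      ρ τ ≤ M * Real.exp (ω * t) * ρ (τ + t)

/-- The lower density of a set `A ⊆ ℕ`. -/
noncomputable def ldens (A : Set ℕ) : ℝ :=
  atTop.liminf fun N : ℕ => ((A ∩ Set.Iic N).ncard : ℝ) / (N : ℝ)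

/-- Membership in `c₀(ℤ)`. -/
def Memc0Z (x : ℤ → ℝ) : Prop := ∀ ε : ℝ, 0 < ε → {k : ℤ | ε ≤ |x k|}.Finite

/-- The weighted backward shift on sequences over ℤ with weights `w_k = ρ(k)/ρ(k+1)`. -/
noncomputable def BwShift (ρ : ℝ → ℝ) (x : ℤ → ℝ) : ℤ → ℝ :=
  fun k => (ρ (k : ℝ) / ρ ((k : ℝ) + 1)) * x (k + 1)

/-- Frequent hypercyclicity of `B_w` on `c₀(ℤ)`. -/
def FHBwShift (ρ : ℝ → ℝ) : Prop :=
  ∃ x : ℤ → ℝ, Memc0Z x ∧ ∀ y : ℤ → ℝ, Memc0Z y → ∀ ε : ℝ, 0 < ε →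
    0 < ldens {n : ℕ | ∀ k : ℤ, |((BwShift ρ)^[n] x) k - y k| ≤ ε}

/-- Membership in `C₀^ρ(ℝ)`. -/
def MemC0rho (ρ f : ℝ → ℝ) : Prop :=
  Continuous f ∧ Tendsto (fun x => f x * ρ x) atTop (nhds 0) ∧
    Tendsto (fun x => f x * ρ x) atBot (nhds 0)

/-- Frequent hypercyclicity of the translation semigroup on `C₀^ρ(ℝ)`. -/
def FHTransC0 (ρ : ℝ → ℝ) : Prop :=
  ∃ f : ℝ → ℝ, MemC0rho ρ f ∧ ∀ g : ℝ → ℝ, MemC0rho ρ g → ∀ ε : ℝ, 0 < ε →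
    0 < ldensR {t : ℝ | 0 ≤ t ∧ ∀ x : ℝ, |f (x + t) - g x| * ρ x ≤ ε}

/-! ### Lower densities -/

/-- Positivity of the lower density without `liminf`; the quotients are bounded, so the real-valued
`liminf` takes no junk value. -/
theorem ldens_pos_iff (A : Set ℕ) :
    0 < ldens A ↔ ∃ c : ℝ, 0 < c ∧ ∀ᶠ N : ℕ in atTop, c * N ≤ ((A ∩ Set.Iic N).ncard : ℝ) := by
  have h0 : ∀ N : ℕ, 0 ≤ ((A ∩ Set.Iic N).ncard : ℝ) / (N : ℝ) := fun N => by positivity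
  have h2 : ∀ N : ℕ, ((A ∩ Set.Iic N).ncard : ℝ) / (N : ℝ) ≤ 2 := by
    intro N
    rcases Nat.eq_zero_or_pos N with rfl | hN
    · simp
    · have hN' : (1 : ℝ) ≤ N := by exact_mod_cast hN
      rw [div_le_iff₀ (by linarith)]
      have h := Set.ncard_le_ncard (Set.inter_subset_right (s := A)) (Set.finite_Iic N)
      have h' : (Set.Iic N).ncard = N + 1 := by
        rw [← Finset.coe_Iic, Set.ncard_coe_finset, Nat.card_Iic]
      rw [h'] at h
      have : ((A ∩ Set.Iic N).ncard : ℝ) ≤ N + 1 := by exact_mod_cast h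
      linarith
  constructor
  · intro h
    obtain ⟨c, hc, hc'⟩ := exists_between h
    refine ⟨c, hc, ?_⟩
    have := eventually_lt_of_lt_liminf hc' (isBoundedUnder_of ⟨0, h0⟩)
    filter_upwards [this, eventually_gt_atTop 0] with N hN hN0
    have hN' : (0 : ℝ) < N := by exact_mod_cast hN0
    rw [lt_div_iff₀ hN'] at hN
    exact hN.le
  · rintro ⟨c, hc, h⟩
    refine hc.trans_le (le_liminf_of_le
      (IsBoundedUnder.isCoboundedUnder_ge (isBoundedUnder_of ⟨2, h2⟩)) ?_)
    filter_upwards [h, eventually_gt_atTop 0] with N hN hN0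
    have hN' : (0 : ℝ) < N := by exact_mod_cast hN0
    rwa [le_div_iff₀ hN']

theorem ldensR_pos_iff (A : Set ℝ) :
    0 < ldensR A ↔ ∃ c : ℝ, 0 < c ∧
      ∀ᶠ N : ℝ in atTop, c * N ≤ (volume (A ∩ Set.Icc 0 N)).toReal := by
  have h0 : ∀ N : ℝ, 0 ≤ (volume (A ∩ Set.Icc 0 N)).toReal / N := by
    intro N
    rcases le_or_gt 0 N with hN | hN
    · positivity
    · simp [Set.Icc_eq_empty_of_lt hN]
  have h2 : ∀ N : ℝ, (volume (A ∩ Set.Icc 0 N)).toReal / N ≤ 1 := by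
    intro N
    rcases le_or_gt N 0 with hN | hN
    · exact (div_nonpos_of_nonneg_of_nonpos ENNReal.toReal_nonneg hN).trans zero_le_one
    · rw [div_le_one hN]
      refine ENNReal.toReal_le_of_le_ofReal hN.le ?_
      refine (measure_mono Set.inter_subset_right).trans ?_
      simp
  constructor
  · intro h
    obtain ⟨c, hc, hc'⟩ := exists_between h
    refine ⟨c, hc, ?_⟩
    have := eventually_lt_of_lt_liminf hc' (isBoundedUnder_of ⟨0, h0⟩)
    filter_upwards [this, eventually_gt_atTop 0] with N hN hN0
    rw [lt_div_iff₀ hN0] at hN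
    exact hN.le
  · rintro ⟨c, hc, h⟩
    refine hc.trans_le (le_liminf_of_le
      (IsBoundedUnder.isCoboundedUnder_ge (isBoundedUnder_of ⟨1, h2⟩)) ?_)
    filter_upwards [h, eventually_gt_atTop 0] with N hN hN0
    rwa [le_div_iff₀ hN0]

theorem ldens_pos_mono {A B : Set ℕ} (h : A ⊆ B) (hA : 0 < ldens A) : 0 < ldens B := by
  rw [ldens_pos_iff] at *
  obtain ⟨c, hc, hA⟩ := hA
  refine ⟨c, hc, ?_⟩
  filter_upwards [hA] with N hN
  refine hN.trans ?_
  exact_mod_cast Set.ncard_le_ncard (Set.inter_subset_inter_left _ h)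
    ((Set.finite_Iic N).subset Set.inter_subset_right)

/-- If every point of `A` lies in `B` or directly above a point of `B`, then `A` has at most twice as
many points as `B` below each bound. -/
theorem ldens_pos_of_subset_union_succ {A B : Set ℕ}
    (h : ∀ n ∈ A, n ∈ B ∨ ∃ m ∈ B, n = m + 1) (hA : 0 < ldens A) : 0 < ldens B := by
  rw [ldens_pos_iff] at *
  obtain ⟨c, hc, hA⟩ := hA
  refine ⟨c / 2, by positivity, ?_⟩
  filter_upwards [hA] with N hN
  have hfin : (B ∩ Set.Iic N).Finite := (Set.finite_Iic N).subset Set.inter_subset_right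
  have hsub : A ∩ Set.Iic N ⊆ (B ∩ Set.Iic N) ∪ (fun m => m + 1) '' (B ∩ Set.Iic N) := by
    rintro n ⟨hn, hnN⟩
    rcases h n hn with hB | ⟨m, hm, rfl⟩
    · exact Or.inl ⟨hB, hnN⟩
    · exact Or.inr ⟨m, ⟨hm, by simp at hnN ⊢; omega⟩, rfl⟩
  have h1 := Set.ncard_le_ncard hsub (hfin.union (hfin.image _))
  have h2 := Set.ncard_union_le (B ∩ Set.Iic N) ((fun m => m + 1) '' (B ∩ Set.Iic N))
  have h3 := Set.ncard_image_le (f := fun m => m + 1) hfin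
  have h4 : (A ∩ Set.Iic N).ncard ≤ 2 * (B ∩ Set.Iic N).ncard := by omega
  have h5 : ((A ∩ Set.Iic N).ncard : ℝ) ≤ 2 * ((B ∩ Set.Iic N).ncard : ℝ) := by exact_mod_cast h4
  linarith

/-- If the integer parts of the points of `M` lie in `E`, then `M` is covered by the unit intervals
`[n, n + 1]`, `n ∈ E`, so positive lower density passes from `M` to `E`. -/
theorem ldens_pos_of_floor {M : Set ℝ} {E : Set ℕ} (h : ∀ t ∈ M, 0 ≤ t → ⌊t⌋₊ ∈ E)
    (hM : 0 < ldensR M) : 0 < ldens E := by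
  rw [ldens_pos_iff]
  obtain ⟨c, hc, hM⟩ := (ldensR_pos_iff M).1 hM
  refine ⟨c, hc, ?_⟩
  filter_upwards [tendsto_natCast_atTop_atTop.eventually hM] with N hN
  refine hN.trans ?_
  have hfin : (E ∩ Set.Iic N).Finite := (Set.finite_Iic N).subset Set.inter_subset_right
  have hsub : M ∩ Set.Icc 0 (N : ℝ) ⊆
      ⋃ n ∈ hfin.toFinset, Set.Icc (n : ℝ) (n + 1) := by
    rintro t ⟨ht, ht0, htN⟩
    simp only [Set.mem_iUnion]
    refine ⟨⌊t⌋₊, ?_, Nat.floor_le ht0, (Nat.lt_floor_add_one t).le⟩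
    rw [Set.Finite.mem_toFinset]
    exact ⟨h t ht ht0, Nat.floor_le_of_le htN⟩
  rw [Set.ncard_eq_toFinset_card _ hfin]
  refine ENNReal.toReal_le_of_le_ofReal (by positivity) ?_
  refine (measure_mono hsub).trans ((measure_biUnion_finset_le _ _).trans ?_)
  simp

theorem ldensR_pos_of_intervals {M : Set ℝ} {E : Set ℕ} {δ : ℝ} (hδ : 0 < δ) (hδ1 : δ ≤ 1)
    (h : ∀ n ∈ E, Set.Ico (n : ℝ) (n + δ) ⊆ M) (hE : 0 < ldens E) : 0 < ldensR M := by
  rw [ldensR_pos_iff]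
  obtain ⟨c, hc, hE⟩ := (ldens_pos_iff E).1 hE
  refine ⟨δ * c / 2, by positivity, ?_⟩
  have ht : Tendsto (fun x : ℝ => ⌊x - 1⌋₊) atTop atTop :=
    tendsto_nat_floor_atTop.comp (tendsto_atTop_add_const_right _ (-1) tendsto_id)
  filter_upwards [ht.eventually hE, eventually_ge_atTop 4] with X hX hX4
  set N := ⌊X - 1⌋₊
  have hfin : (E ∩ Set.Iic N).Finite := (Set.finite_Iic N).subset Set.inter_subset_right
  have hN1 : (N : ℝ) ≤ X - 1 := Nat.floor_le (by linarith)
  have hN2 : X - 1 < N + 1 := Nat.lt_floor_add_one _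
  have hsub : (⋃ n ∈ hfin.toFinset, Set.Ico (n : ℝ) (n + δ)) ⊆ M ∩ Set.Icc 0 X := by
    intro t ht
    simp only [Set.mem_iUnion, Set.Finite.mem_toFinset] at ht
    obtain ⟨n, ⟨hn, hnN⟩, ht⟩ := ht
    have hnN' : (n : ℝ) ≤ N := by exact_mod_cast hnN
    have hn0 : (0 : ℝ) ≤ n := n.cast_nonneg
    exact ⟨h n hn ht, hn0.trans ht.1, by linarith [ht.2]⟩
  have hvol : volume (⋃ n ∈ hfin.toFinset, Set.Ico (n : ℝ) (n + δ)) =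
      ENNReal.ofReal ((E ∩ Set.Iic N).ncard * δ) := by
    rw [measure_biUnion_finset]
    · rw [Set.ncard_eq_toFinset_card _ hfin]
      simp [ENNReal.ofReal_mul]
    · intro a _ b _ hab
      refine Set.disjoint_left.2 fun t ht ht' => hab ?_
      have h1 : (a : ℝ) < b + 1 := by linarith [ht.1, ht'.2]
      have h2 : (b : ℝ) < a + 1 := by linarith [ht.2, ht'.1]
      have h1' : a < b + 1 := by exact_mod_cast h1
      have h2' : b < a + 1 := by exact_mod_cast h2
      omega
    · intro b _
      exact measurableSet_Ico
  have hfinvol : volume (M ∩ Set.Icc 0 X) ≠ ⊤ :=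
    measure_ne_top_of_subset Set.inter_subset_right (by simp)
  have hle := ENNReal.toReal_mono hfinvol (measure_mono (μ := volume) hsub)
  rw [hvol, ENNReal.toReal_ofReal (by positivity)] at hle
  refine le_trans ?_ hle
  have : c * (X / 2) ≤ c * N := by gcongr; linarith
  nlinarith [mul_le_mul_of_nonneg_right (this.trans hX) hδ.le]

/-! ### Comparison of weight values and membership criteria -/

/-- The weight varies by at most a constant factor over distances up to `1`. Admissibility bounds `ρ`
from above by its values further right; the ratio hypothesis on the integers gives the opposite
bound, since going left from `x` to `y` one may pass through the integer `⌊y⌋ + 2 ≥ x` and step back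
to `⌊y⌋`. -/
theorem exists_comparison {ρ : ℝ → ℝ} (hρ : Admissible ρ)
    (hsup : ∃ C : ℝ, ∀ k : ℤ, ρ ((k : ℝ) + 1) / ρ (k : ℝ) ≤ C) :
    ∃ K : ℝ, 1 ≤ K ∧ ∀ x y, |x - y| ≤ 1 → ρ x ≤ K * ρ y := by
  obtain ⟨-, hpos, M, hM, ω, hω⟩ := hρ
  obtain ⟨C, hC⟩ := hsup
  have hC0 : 0 < C := lt_of_lt_of_le (div_pos (hpos _) (hpos _)) (hC 0)
  have hC' : ∀ k : ℤ, ρ ((k : ℝ) + 1) ≤ C * ρ k := fun k => (div_le_iff₀ (hpos _)).1 (hC k)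
  set L := M * Real.exp (|ω| * 2) with hL
  have hL1 : 1 ≤ L := by
    have : 1 ≤ Real.exp (|ω| * 2) := Real.one_le_exp (by positivity)
    nlinarith
  have hup : ∀ x y, x ≤ y → y - x ≤ 2 → ρ x ≤ L * ρ y := by
    intro x y hxy hxy2
    rcases hxy.eq_or_lt with rfl | hlt
    · nlinarith [hpos x]
    · have h := hω x (y - x) (by linarith)
      rw [add_sub_cancel] at h
      refine h.trans ?_
      have h1 : ω * (y - x) ≤ |ω| * 2 :=
        (mul_le_mul_of_nonneg_right (le_abs_self ω) (by linarith)).trans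
          (mul_le_mul_of_nonneg_left hxy2 (abs_nonneg _))
      have := hpos y
      rw [hL]
      gcongr
  refine ⟨L + L * (C * (C * L)), ?_, ?_⟩
  · have : 0 ≤ L * (C * (C * L)) := by positivity
    linarith
  intro x y hxy
  rw [abs_le] at hxy
  have hy := hpos y
  rw [add_mul]
  rcases le_total x y with h | h
  · have h1 := hup x y h (by linarith)
    have : 0 ≤ L * (C * (C * L)) * ρ y := by positivity
    linarith
  · have hf1 := Int.floor_le y
    have hf2 := Int.lt_floor_add_one y
    have h1 := hup x ((⌊y⌋ : ℝ) + 1 + 1) (by linarith) (by linarith)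
    have h2 := hC' (⌊y⌋ + 1)
    push_cast at h2
    have h3 := hC' ⌊y⌋
    have h4 := hup ⌊y⌋ y hf1 (by linarith)
    have h5 : ρ x ≤ L * (C * (C * (L * ρ y))) := by
      refine h1.trans ?_
      gcongr
      refine h2.trans ?_
      gcongr
      refine h3.trans ?_
      gcongr
    have : 0 ≤ L * ρ y := by positivity
    nlinarith

/-- Iterating the comparison along `n + 1` equal steps between `x` and `y`. -/
theorem comparison_pow {ρ : ℝ → ℝ} {K : ℝ} (hK : 1 ≤ K)
    (hcomp : ∀ x y, |x - y| ≤ 1 → ρ x ≤ K * ρ y) (n : ℕ) :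
    ∀ x y : ℝ, |x - y| ≤ (n : ℝ) → ρ x ≤ K ^ n * ρ y := by
  induction n with
  | zero =>
    intro x y h
    have : x = y := by
      rw [Nat.cast_zero, abs_nonpos_iff] at h
      linarith
    simp [this]
  | succ n ih =>
    intro x y h
    push_cast at h
    have hn : (0 : ℝ) < n + 1 := by positivity
    have e1 : x - (x + (y - x) / (n + 1)) = (x - y) / (n + 1) := by ring
    have e2 : x + (y - x) / (n + 1) - y = (x - y) / (n + 1) * n := by field_simp; ring
    have h1 : |(x - y) / ((n : ℝ) + 1)| ≤ 1 := by
      rw [abs_div, abs_of_pos hn, div_le_one hn]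
      exact h
    have h2 := hcomp x (x + (y - x) / (n + 1)) (by rw [e1]; exact h1)
    have h3 := ih (x + (y - x) / (n + 1)) y (by
      rw [e2, abs_mul, abs_of_nonneg (n.cast_nonneg : (0 : ℝ) ≤ n)]
      exact mul_le_of_le_one_left (by positivity) h1)
    calc ρ x ≤ K * ρ (x + (y - x) / (n + 1)) := h2
      _ ≤ K * (K ^ n * ρ y) := by gcongr
      _ = K ^ (n + 1) * ρ y := by ring

theorem exists_local_bounds {ρ : ℝ → ℝ} (hpos : ∀ x, 0 < ρ x) {K : ℝ} (hK : 1 ≤ K)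
    (hcomp : ∀ x y, |x - y| ≤ 1 → ρ x ≤ K * ρ y) (n : ℕ) :
    ∃ b B : ℝ, 0 < b ∧ 0 < B ∧ ∀ x : ℝ, |x| ≤ (n : ℝ) → b ≤ ρ x ∧ ρ x ≤ B := by
  have hKn : 0 < K ^ n := by positivity
  refine ⟨ρ 0 / K ^ n, K ^ n * ρ 0, div_pos (hpos 0) hKn, mul_pos hKn (hpos 0), fun x hx => ⟨?_, ?_⟩⟩
  · rw [div_le_iff₀' hKn]
    exact comparison_pow hK hcomp n 0 x (by simpa using hx)
  · exact comparison_pow hK hcomp n x 0 (by simpa using hx)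

theorem memC0rho_iff {ρ f : ℝ → ℝ} :
    MemC0rho ρ f ↔ Continuous f ∧
      ∀ ε : ℝ, 0 < ε → ∃ N : ℕ, ∀ x : ℝ, (N : ℝ) < |x| → |f x * ρ x| ≤ ε := by
  refine and_congr_right fun _ => ⟨?_, ?_⟩
  · rintro ⟨h1, h2⟩ ε hε
    rw [Metric.tendsto_atTop] at h1
    obtain ⟨a, ha⟩ := h1 ε hε
    have h2' := h2.eventually (Metric.ball_mem_nhds 0 hε)
    obtain ⟨b, hb⟩ := eventually_atBot.1 h2'
    obtain ⟨N, hN⟩ := exists_nat_ge (max a (-b))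
    refine ⟨N, fun x hx => ?_⟩
    rcases lt_abs.1 hx with h | h
    · have := ha x (by linarith [le_max_left a (-b)])
      rw [dist_zero_right, Real.norm_eq_abs] at this
      exact this.le
    · have := hb x (by linarith [le_max_right a (-b)])
      simp only [dist_zero_right, Real.norm_eq_abs] at this
      exact this.le
  · intro h
    constructor
    · rw [Metric.tendsto_atTop]
      intro ε hε
      obtain ⟨N, hN⟩ := h (ε / 2) (by positivity)
      refine ⟨N + 1, fun x hx => ?_⟩
      rw [dist_zero_right, Real.norm_eq_abs]
      linarith [hN x (by linarith [le_abs_self x])]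
    · rw [Metric.tendsto_nhds]
      intro ε hε
      obtain ⟨N, hN⟩ := h (ε / 2) (by positivity)
      filter_upwards [eventually_le_atBot (-(N : ℝ) - 1)] with x hx
      rw [dist_zero_right, Real.norm_eq_abs]
      linarith [hN x (by linarith [neg_le_abs x])]

theorem memc0Z_iff {x : ℤ → ℝ} :
    Memc0Z x ↔ ∀ ε : ℝ, 0 < ε → ∃ N : ℕ, ∀ k : ℤ, (N : ℤ) < |k| → |x k| ≤ ε := by
  constructor
  · intro h ε hε
    obtain ⟨N, hN⟩ := (h ε hε).bddAbove
    obtain ⟨N', hN'⟩ := (h ε hε).bddBelow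
    refine ⟨(max N (-N')).toNat, fun k hk => ?_⟩
    by_contra! hlt
    have h1 := hN (show k ∈ {k : ℤ | ε ≤ |x k|} from hlt.le)
    have h2 := hN' (show k ∈ {k : ℤ | ε ≤ |x k|} from hlt.le)
    rcases lt_abs.1 hk with h | h <;> omega
  · intro h ε hε
    obtain ⟨N, hN⟩ := h (ε / 2) (by positivity)
    refine (Set.finite_Icc (-(N : ℤ)) N).subset fun k hk => ?_
    rw [Set.mem_Icc, ← abs_le]
    by_contra! hlt
    have := hN k hlt
    have hk' : ε ≤ |x k| := hk
    linarith

/-! ### Blocks in frequently hypercyclic vectors -/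

/-- `v` contains frequently recurring blocks of every height `A ≥ 1` and radius `R`: there is a set of
positions `n` of positive lower density such that `|v|` is between `A` and `A + 2` on
`[n - R, n + R]`, is at most `A + 2` at the two adjacent points, and is small everywhere else when
measured with the weight recentred at `n`. The adjacent points are left free because integer parts
of real visit times produce an uncertainty of one position. -/
def HasBlocks (ρ : ℝ → ℝ) (v : ℤ → ℝ) : Prop :=
  ∀ A : ℝ, 1 ≤ A → ∀ R : ℕ, ∀ ε : ℝ, 0 < ε →
    0 < ldens {n : ℕ | ∀ j : ℤ, (|j| ≤ (R : ℤ) → A ≤ |v (n + j)|) ∧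
      (|j| ≤ (R : ℤ) + 1 → |v (n + j)| ≤ A + 2) ∧
      ((R : ℤ) + 1 < |j| → |v (n + j)| * ρ j ≤ ε)}

/-- Dividing by `ρ` conjugates the weighted shift to the unweighted one. -/
theorem bwShift_iterate {ρ : ℝ → ℝ} (hpos : ∀ x, 0 < ρ x) (x : ℤ → ℝ) (n : ℕ) (k : ℤ) :
    (BwShift ρ)^[n] x k = x (n + k) / ρ ((n : ℝ) + k) * ρ k := by
  induction n generalizing k with
  | zero =>
    have := (hpos k).ne'
    simp
    field_simp
  | succ n ih =>
    rw [Function.iterate_succ_apply']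
    simp only [BwShift]
    rw [ih]
    have e : (n : ℤ) + (k + 1) = ((n + 1 : ℕ) : ℤ) + k := by push_cast; ring
    rw [e]
    push_cast
    have e' : (n : ℝ) + (k + 1) = n + 1 + k := by ring
    rw [e']
    have := (hpos ((k : ℝ) + 1)).ne'
    field_simp

/-- The blocks occur when the orbit visits the targets `(A + 1) ρ 1_{[-R, R]}`. -/
theorem FHBwShift.exists_hasBlocks {ρ : ℝ → ℝ} (hpos : ∀ x, 0 < ρ x) {K : ℝ} (hK : 1 ≤ K)
    (hcomp : ∀ x y, |x - y| ≤ 1 → ρ x ≤ K * ρ y) (h : FHBwShift ρ) :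
    ∃ v : ℤ → ℝ, Memc0Z (fun k => v k * ρ k) ∧ HasBlocks ρ v := by
  obtain ⟨x, hx, hfh⟩ := h
  refine ⟨fun k => x k / ρ k, ?_, ?_⟩
  · convert hx using 2 with k
    exact div_mul_cancel₀ _ (hpos _).ne'
  intro A hA R ε hε
  obtain ⟨b, B, hb, -, hbB⟩ := exists_local_bounds hpos hK hcomp (R + 1)
  refine ldens_pos_mono ?_ (hfh (fun j => if |j| ≤ (R : ℤ) then (A + 1) * ρ j else 0) ?_
    (min ε b) (lt_min hε hb))
  · intro n hn j
    have hj := hn j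
    have hρ := hpos j
    simp only [bwShift_iterate hpos] at hj
    push_cast
    set a := x (n + j) / ρ ((n : ℝ) + j)
    have hb' : |j| ≤ (R : ℤ) + 1 → b ≤ ρ j := fun h => by
      refine (hbB j ?_).1
      rw [← Int.cast_abs]
      exact_mod_cast h
    have key : |j| ≤ (R : ℤ) → |a - (A + 1)| ≤ 1 := by
      intro h
      rw [if_pos h, ← sub_mul, abs_mul, abs_of_pos hρ] at hj
      have h2 := hb' (by omega)
      by_contra! h3
      nlinarith [min_le_right ε b]
    refine ⟨fun h => ?_, fun h => ?_, fun h => ?_⟩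
    · have := abs_le.1 (key h)
      exact le_trans (by linarith) (le_abs_self a)
    · by_cases h' : |j| ≤ (R : ℤ)
      · have := abs_le.1 (key h')
        rw [abs_le]
        constructor <;> linarith
      · rw [if_neg h', sub_zero, abs_mul, abs_of_pos hρ] at hj
        have h2 := hb' h
        by_contra! h3
        nlinarith [min_le_right ε b]
    · rw [if_neg (by omega), sub_zero, abs_mul, abs_of_pos hρ] at hj
      exact hj.trans (min_le_left _ _)
  · rw [memc0Z_iff]
    intro e he
    refine ⟨R, fun k hk => ?_⟩
    rw [if_neg (not_le.2 hk), abs_zero]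
    exact he.le

/-- The trapezoidal function equal to `1` on `[-R - 1, R]` and to `0` outside `[-R - 2, R + 1]`. The
plateau is long enough to see the integers in `[-R, R]` after a shift by an amount in `[0, 1)` to the
left. -/
noncomputable def trapezoid (R : ℕ) (x : ℝ) : ℝ := max 0 (min 1 (R + 3 / 2 - |x + 1 / 2|))

theorem continuous_trapezoid (R : ℕ) : Continuous (trapezoid R) := by
  unfold trapezoid; fun_prop

theorem trapezoid_nonneg (R : ℕ) (x : ℝ) : 0 ≤ trapezoid R x := le_max_left _ _

theorem trapezoid_le_one (R : ℕ) (x : ℝ) : trapezoid R x ≤ 1 :=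
  max_le zero_le_one (min_le_left _ _)

theorem trapezoid_eq_one {R : ℕ} {x : ℝ} (h1 : -(R : ℝ) - 1 ≤ x) (h2 : x ≤ R) :
    trapezoid R x = 1 := by
  have : |x + 1 / 2| ≤ R + 1 / 2 := by rw [abs_le]; constructor <;> linarith
  rw [trapezoid, min_eq_left (by linarith), max_eq_right zero_le_one]

theorem trapezoid_eq_zero {R : ℕ} {x : ℝ} (h : x ≤ -(R : ℝ) - 2 ∨ (R : ℝ) + 1 ≤ x) :
    trapezoid R x = 0 := by
  refine max_eq_left ((min_le_right _ _).trans ?_)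
  rcases h with h | h
  · linarith [neg_le_abs (x + 1 / 2)]
  · linarith [le_abs_self (x + 1 / 2)]

theorem memC0rho_of_support {ρ f : ℝ → ℝ} (hf : Continuous f) (N : ℕ)
    (h : ∀ x : ℝ, (N : ℝ) < |x| → f x = 0) : MemC0rho ρ f := by
  refine memC0rho_iff.2 ⟨hf, fun ε hε => ⟨N, fun x hx => ?_⟩⟩
  rw [h x hx, zero_mul, abs_zero]
  exact hε.le

/-- The values at the integers of a frequently hypercyclic function contain the blocks: visits to a
trapezoid of height `A + 1` at time `t` give a block at `⌊t⌋`. -/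
theorem FHTransC0.exists_hasBlocks {ρ : ℝ → ℝ} (hpos : ∀ x, 0 < ρ x) {K : ℝ} (hK : 1 ≤ K)
    (hcomp : ∀ x y, |x - y| ≤ 1 → ρ x ≤ K * ρ y) (h : FHTransC0 ρ) :
    ∃ v : ℤ → ℝ, Memc0Z (fun k => v k * ρ k) ∧ HasBlocks ρ v := by
  obtain ⟨f, hf, hfh⟩ := h
  refine ⟨fun k => f k, ?_, ?_⟩
  · rw [memc0Z_iff]
    intro ε hε
    obtain ⟨N, hN⟩ := (memC0rho_iff.1 hf).2 ε hε
    refine ⟨N, fun k hk => hN k ?_⟩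
    rw [← Int.cast_abs]
    exact_mod_cast hk
  intro A hA R ε hε
  obtain ⟨b, B, hb, -, hbB⟩ := exists_local_bounds hpos hK hcomp (R + 2)
  have hK0 : 0 < K := by linarith
  have hg : MemC0rho ρ (fun x => (A + 1) * trapezoid R x) := by
    refine memC0rho_of_support (continuous_const.mul (continuous_trapezoid R)) (R + 2) fun x hx => ?_
    push_cast at hx
    rw [trapezoid_eq_zero, mul_zero]
    rcases lt_abs.1 hx with h | h
    · right; linarith
    · left; linarith
  refine ldens_pos_of_floor ?_ (hfh _ hg (min (ε / K) b) (lt_min (by positivity) hb))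
  rintro t ⟨ht0, ht⟩ - j
  -- `y` lies in `(j - 1, j]` and `y + t = ⌊t⌋ + j`
  set y : ℝ := ⌊t⌋₊ + j - t with hy
  have h1 := Nat.floor_le ht0
  have h2 := Nat.lt_floor_add_one t
  have hyj : y ≤ j := by linarith
  have hyj' : (j : ℝ) - 1 < y := by linarith
  have hty := ht y
  have e : y + t = ⌊t⌋₊ + j := by ring
  rw [e] at hty
  push_cast
  set a := f (⌊t⌋₊ + j)
  have hρ := hpos y
  have hab : |j| ≤ (R : ℤ) + 1 → |a - (A + 1) * trapezoid R y| ≤ 1 := by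
    intro h
    have h' := abs_le.1 h
    have hj1 : -((R : ℝ) + 1) ≤ j := by exact_mod_cast h'.1
    have hj2 : (j : ℝ) ≤ R + 1 := by exact_mod_cast h'.2
    have h2 := (hbB y (by push_cast; rw [abs_le]; constructor <;> linarith)).1
    by_contra! h3
    nlinarith [min_le_right (ε / K) b]
  refine ⟨fun h => ?_, fun h => ?_, fun h => ?_⟩
  · have h3 := abs_le.1 (hab (by omega))
    have h' := abs_le.1 h
    have hj1 : -(R : ℝ) ≤ j := by exact_mod_cast h'.1
    have hj2 : (j : ℝ) ≤ R := by exact_mod_cast h'.2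
    rw [trapezoid_eq_one (by linarith) (by linarith)] at h3
    exact le_trans (by linarith) (le_abs_self a)
  · have h3 := abs_le.1 (hab h)
    have h4 : (A + 1) * trapezoid R y ≤ A + 1 :=
      mul_le_of_le_one_right (by linarith) (trapezoid_le_one R y)
    have h5 : 0 ≤ (A + 1) * trapezoid R y := mul_nonneg (by linarith) (trapezoid_nonneg R y)
    rw [abs_le]
    constructor <;> linarith
  · have h0 : trapezoid R y = 0 := by
      apply trapezoid_eq_zero
      rcases lt_abs.1 h with h | h
      · right
        have : (R : ℝ) + 1 + 1 ≤ j := by exact_mod_cast h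
        linarith
      · left
        have : (R : ℝ) + 1 + 1 ≤ -j := by exact_mod_cast h
        linarith
    rw [h0, mul_zero, sub_zero] at hty
    have h6 : ρ j ≤ K * ρ y := hcomp _ _ (by rw [abs_le]; constructor <;> linarith)
    calc |a| * ρ j ≤ |a| * (K * ρ y) := by gcongr
      _ = K * (|a| * ρ y) := by ring
      _ ≤ K * (ε / K) := by gcongr; exact hty.trans (min_le_left _ _)
      _ = ε := by field_simp

/-! ### A countable dense family -/

/-- A countable dense family of compactly supported functions in `C₀^ρ(ℝ)`: cut-offs of a sequence
that is dense in `C(ℝ, ℝ)` for locally uniform convergence. -/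
theorem exists_dense_compactSupport {ρ : ℝ → ℝ} (hpos : ∀ x, 0 < ρ x) {K : ℝ} (hK : 1 ≤ K)
    (hcomp : ∀ x y, |x - y| ≤ 1 → ρ x ≤ K * ρ y) :
    ∃ d : ℕ → ℝ → ℝ, (∀ i, Continuous (d i)) ∧
      (∀ i, ∃ N : ℕ, ∀ x : ℝ, (N : ℝ) ≤ |x| → d i x = 0) ∧
      ∀ g, MemC0rho ρ g → ∀ ε : ℝ, 0 < ε → ∃ i, ∀ x, |d i x - g x| * ρ x ≤ ε := by
  refine ⟨fun i x => TopologicalSpace.denseSeq C(ℝ, ℝ) i.unpair.1 x * trapezoid i.unpair.2 x,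
    fun i => (map_continuous _).mul (continuous_trapezoid _), fun i => ⟨i.unpair.2 + 2, ?_⟩, ?_⟩
  · intro x hx
    push_cast at hx
    dsimp only
    rw [trapezoid_eq_zero, mul_zero]
    rcases le_abs.1 hx with h | h
    · right; linarith
    · left; linarith
  intro g hg ε hε
  obtain ⟨hgc, hg⟩ := memC0rho_iff.1 hg
  obtain ⟨N, hN⟩ := hg (ε / 2) (by positivity)
  obtain ⟨b, B, -, hB, hbB⟩ := exists_local_bounds hpos hK hcomp (N + 3)
  have hU : {F : C(ℝ, ℝ) | ∀ x ∈ Set.Icc (-(N : ℝ) - 3) (N + 3),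
      dist (F x) (g x) < ε / (2 * B)} ∈ nhds (⟨g, hgc⟩ : C(ℝ, ℝ)) := by
    have := (ContinuousMap.tendsto_iff_forall_isCompact_tendstoUniformlyOn
      (F := fun F : C(ℝ, ℝ) => F) (p := nhds ⟨g, hgc⟩) (f := ⟨g, hgc⟩)).1 tendsto_id
        (Set.Icc (-(N : ℝ) - 3) (N + 3)) isCompact_Icc
    rw [Metric.tendstoUniformlyOn_iff] at this
    filter_upwards [this (ε / (2 * B)) (by positivity)] with F hF x hx
    rw [dist_comm]
    exact hF x hx
  obtain ⟨i, hi⟩ := (TopologicalSpace.denseRange_denseSeq C(ℝ, ℝ)).exists_mem_open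
    isOpen_interior ⟨_, mem_interior_iff_mem_nhds.2 hU⟩
  have hi := interior_subset hi
  simp only [Set.mem_ofPred_eq] at hi
  refine ⟨Nat.pair i N, fun x => ?_⟩
  simp only [Nat.unpair_pair]
  set F := TopologicalSpace.denseSeq C(ℝ, ℝ) i
  have hρ := hpos x
  have h0 := trapezoid_nonneg N x
  have h1 := trapezoid_le_one N x
  -- the error splits into the approximation error and the cut-off error
  have e : F x * trapezoid N x - g x = trapezoid N x * (F x - g x) + (1 - trapezoid N x) * (-g x) := by
    ring
  have hA : |trapezoid N x * (F x - g x)| * ρ x ≤ ε / 2 := by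
    by_cases hx : x ∈ Set.Icc (-(N : ℝ) - 3) (N + 3)
    · have h2 := hi x hx
      rw [Real.dist_eq] at h2
      have h3 := (hbB x (by push_cast; rw [abs_le]; constructor <;> linarith [hx.1, hx.2])).2
      rw [abs_mul, abs_of_nonneg h0]
      calc trapezoid N x * |F x - g x| * ρ x ≤ 1 * (ε / (2 * B)) * B := by gcongr
        _ = ε / 2 := by field_simp
    · rw [trapezoid_eq_zero]
      · simp; positivity
      · rw [Set.mem_Icc, not_and_or, not_le, not_le] at hx
        rcases hx with h | h
        · left; linarith
        · right; linarith
  have hC : |(1 - trapezoid N x) * (-g x)| * ρ x ≤ ε / 2 := by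
    by_cases hx : (N : ℝ) < |x|
    · have h2 := hN x hx
      rw [abs_mul, abs_of_pos hρ] at h2
      rw [abs_mul, abs_neg, abs_of_nonneg (by linarith : 0 ≤ 1 - trapezoid N x)]
      calc (1 - trapezoid N x) * |g x| * ρ x ≤ 1 * |g x| * ρ x := by gcongr; linarith
        _ ≤ ε / 2 := by linarith
    · have := abs_le.1 (not_lt.1 hx)
      rw [trapezoid_eq_one (by linarith) (by linarith)]
      simp; positivity
  calc |F x * trapezoid N x - g x| * ρ x
      ≤ (|trapezoid N x * (F x - g x)| + |(1 - trapezoid N x) * (-g x)|) * ρ x := by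
        rw [e]; gcongr; exact abs_add_le _ _
    _ ≤ ε := by rw [add_mul]; linarith

/-! ### Frequent hypercyclicity of the unit translation -/

/-- Frequent hypercyclicity of the single translation `T₁` on `C₀^ρ(ℝ)`. -/
def FHUnitTranslation (ρ : ℝ → ℝ) : Prop :=
  ∃ f : ℝ → ℝ, MemC0rho ρ f ∧ ∀ g : ℝ → ℝ, MemC0rho ρ g → ∀ ε : ℝ, 0 < ε →
    0 < ldens {n : ℕ | ∀ x : ℝ, |f (x + n) - g x| * ρ x ≤ ε}

/-- Restriction to the integers, `f ↦ (f(k) ρ(k))ₖ`, intertwines `T₁` with `B_w` and has dense range. -/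
theorem FHUnitTranslation.fhBwShift {ρ : ℝ → ℝ} (hpos : ∀ x, 0 < ρ x)
    (h : FHUnitTranslation ρ) : FHBwShift ρ := by
  obtain ⟨f, hf, hfh⟩ := h
  refine ⟨fun k => f k * ρ k, ?_, ?_⟩
  · rw [memc0Z_iff]
    intro ε hε
    obtain ⟨N, hN⟩ := (memC0rho_iff.1 hf).2 ε hε
    refine ⟨N, fun k hk => hN k ?_⟩
    rw [← Int.cast_abs]
    exact_mod_cast hk
  intro y hy ε hε
  obtain ⟨N, hN⟩ := memc0Z_iff.1 hy (ε / 2) (by positivity)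
  -- a sum of unit tents interpolating the truncated sequence
  let g : ℝ → ℝ := fun x => ∑ k ∈ Finset.Icc (-(N : ℤ)) N, y k / ρ k * max 0 (1 - |x - k|)
  have hgc : Continuous g := by
    refine continuous_finsetSum _ fun k _ => ?_
    fun_prop
  have hg : MemC0rho ρ g := by
    refine memC0rho_of_support hgc (N + 1) fun x hx => Finset.sum_eq_zero fun k hk => ?_
    push_cast at hx
    rw [Finset.mem_Icc] at hk
    have h1 : -(N : ℝ) ≤ k := by exact_mod_cast hk.1
    have h2 : (k : ℝ) ≤ N := by exact_mod_cast hk.2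
    rw [max_eq_left, mul_zero]
    rcases lt_abs.1 hx with h | h
    · linarith [le_abs_self (x - k)]
    · linarith [neg_le_abs (x - k)]
  have hgk : ∀ k : ℤ, |g k * ρ k - y k| ≤ ε / 2 := by
    intro k
    have hterm : ∀ i : ℤ, i ≠ k → y i / ρ i * max 0 (1 - |(k : ℝ) - i|) = 0 := by
      intro i hi
      have h1 : (1 : ℤ) ≤ |k - i| := Int.one_le_abs (sub_ne_zero.2 hi.symm)
      have h2 : (1 : ℝ) ≤ |(k : ℝ) - i| := by exact_mod_cast h1
      rw [max_eq_left (by linarith), mul_zero]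
    by_cases hk : k ∈ Finset.Icc (-(N : ℤ)) N
    · have : g k = y k / ρ k := by
        simp only [g]
        rw [Finset.sum_eq_single_of_mem k hk fun i _ hi => hterm i hi]
        simp
      rw [this, div_mul_cancel₀ _ (hpos _).ne']
      simp; positivity
    · have : g k = 0 := Finset.sum_eq_zero fun i hi => hterm i fun h => hk (h ▸ hi)
      rw [this, zero_mul, zero_sub, abs_neg]
      refine hN k ?_
      rw [Finset.mem_Icc, ← abs_le] at hk
      exact not_le.1 hk
  refine ldens_pos_mono ?_ (hfh g hg (ε / 2) (by positivity))
  intro n hn k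
  have h1 := hn k
  rw [bwShift_iterate hpos]
  push_cast
  rw [mul_div_cancel_right₀ _ (hpos _).ne', add_comm (n : ℝ)]
  have e : f (k + n) * ρ k - y k = (f (k + n) - g k) * ρ k + (g k * ρ k - y k) := by ring
  rw [e]
  refine (abs_add_le _ _).trans ?_
  rw [abs_mul, abs_of_pos (hpos k)]
  linarith [hgk k]

/-- If `n` is a good visit time for the target `g`, then by strong continuity of the semigroup every
`t ∈ [n, n + δ)` is nearly as good, with `δ` depending only on `g` and `ε`. -/
theorem FHUnitTranslation.fhTransC0 {ρ : ℝ → ℝ} (hpos : ∀ x, 0 < ρ x) {K : ℝ} (hK : 1 ≤ K)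
    (hcomp : ∀ x y, |x - y| ≤ 1 → ρ x ≤ K * ρ y)
    (h : FHUnitTranslation ρ) : FHTransC0 ρ := by
  obtain ⟨f, hf, hfh⟩ := h
  refine ⟨f, hf, fun g hg ε hε => ?_⟩
  have hK0 : 0 < K := by linarith
  obtain ⟨hgc, hg0⟩ := memC0rho_iff.1 hg
  obtain ⟨N, hN⟩ := hg0 (ε / (4 * K)) (by positivity)
  obtain ⟨b, B, -, hB, hbB⟩ := exists_local_bounds hpos hK hcomp (N + 1)
  have huc := (isCompact_Icc (a := -(N : ℝ) - 1) (b := N + 2)).uniformContinuousOn_of_continuous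
    hgc.continuousOn
  rw [Metric.uniformContinuousOn_iff] at huc
  obtain ⟨δ, hδ, huc⟩ := huc (ε / (2 * B)) (by positivity)
  refine ldensR_pos_of_intervals (δ := min δ 1) (lt_min hδ one_pos) (min_le_right _ _) ?_
    (hfh g hg (ε / (2 * K)) (by positivity))
  rintro n hn t ⟨ht1, ht2⟩
  have htδ : t - n < δ := by linarith [min_le_left δ 1]
  have ht1' : t - n < 1 := by linarith [min_le_right δ 1]
  refine ⟨(n.cast_nonneg).trans ht1, fun x => ?_⟩
  set s := t - n with hs
  have hs0 : 0 ≤ s := by linarith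
  have hρ := hpos x
  have hρK : ρ x ≤ K * ρ (x + s) := hcomp _ _ (by rw [abs_le]; constructor <;> linarith)
  have h1 : |f (x + t) - g (x + s)| * ρ x ≤ ε / 2 := by
    have h := hn (x + s)
    have e : x + s + n = x + t := by ring
    rw [e] at h
    calc |f (x + t) - g (x + s)| * ρ x ≤ |f (x + t) - g (x + s)| * (K * ρ (x + s)) := by gcongr
      _ = K * (|f (x + t) - g (x + s)| * ρ (x + s)) := by ring
      _ ≤ K * (ε / (2 * K)) := by gcongr
      _ = ε / 2 := by field_simp
  have h2 : |g (x + s) - g x| * ρ x ≤ ε / 2 := by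
    by_cases hx : |x| ≤ N + 1
    · have hx' := abs_le.1 hx
      have h := huc (x + s) ⟨by linarith, by linarith⟩ x ⟨by linarith, by linarith⟩
        (by rw [Real.dist_eq, add_sub_cancel_left, abs_of_nonneg hs0]; exact htδ)
      rw [Real.dist_eq] at h
      have h3 := (hbB x (by push_cast; exact hx)).2
      calc |g (x + s) - g x| * ρ x ≤ ε / (2 * B) * B := by gcongr
        _ = ε / 2 := by field_simp
    · have h3 := hN x (by linarith)
      have h4 := hN (x + s) (by
        have := abs_sub_abs_le_abs_sub x (x + s)
        have h5 : |x - (x + s)| = s := by rw [sub_add_cancel_left, abs_neg, abs_of_nonneg hs0]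
        linarith)
      rw [abs_mul, abs_of_pos (hpos _)] at h3 h4
      have h6 : ε / (4 * K) ≤ ε / 4 := by
        apply div_le_div_of_nonneg_left hε.le (by norm_num) (by linarith)
      calc |g (x + s) - g x| * ρ x ≤ (|g (x + s)| + |g x|) * ρ x := by
            gcongr; exact abs_sub _ _
        _ = |g (x + s)| * ρ x + |g x| * ρ x := by ring
        _ ≤ |g (x + s)| * (K * ρ (x + s)) + |g x| * ρ x := by gcongr
        _ = K * (|g (x + s)| * ρ (x + s)) + |g x| * ρ x := by ring
        _ ≤ K * (ε / (4 * K)) + ε / 4 := by gcongr; exact h3.trans h6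
        _ = ε / 2 := by field_simp; ring
  calc |f (x + t) - g x| * ρ x
      ≤ (|f (x + t) - g (x + s)| + |g (x + s) - g x|) * ρ x := by
        gcongr; exact abs_sub_le _ _ _
    _ ≤ ε := by rw [add_mul]; linarith

/-! ### From blocks to a frequently hypercyclic function -/

/-- The blocks of `v` are replaced by translates of a dense sequence of compactly supported functions
`h p`. Blocks of different heights cannot overlap, and blocks of the same height are disjoint after
a harmless thinning, so the resulting function is dominated by `v`; this yields both membership in
`C₀^ρ(ℝ)` and smallness away from each block. -/
theorem HasBlocks.fhUnitTranslation {ρ : ℝ → ℝ} (hpos : ∀ x, 0 < ρ x) {K : ℝ} (hK : 1 ≤ K)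
    (hcomp : ∀ x y, |x - y| ≤ 1 → ρ x ≤ K * ρ y) {v : ℤ → ℝ}
    (hv : Memc0Z (fun k => v k * ρ k)) (hblocks : HasBlocks ρ v) : FHUnitTranslation ρ := by
  have hK0 : 0 < K := by linarith
  obtain ⟨d, hdc, hdsupp, hdense⟩ := exists_dense_compactSupport hpos hK hcomp
  -- every function of the dense family is a target infinitely often
  let h : ℕ → ℝ → ℝ := fun p => d p.unpair.1
  have hhc : ∀ p, Continuous (h p) := fun p => hdc _
  have hR : ∀ p, ∃ R : ℕ, 1 ≤ R ∧ ∀ x : ℝ, (R : ℝ) ≤ |x| → h p x = 0 := by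
    intro p
    obtain ⟨N, hN⟩ := hdsupp p.unpair.1
    refine ⟨N + 1, by omega, fun x hx => hN x ?_⟩
    push_cast at hx
    linarith
  choose R hR1 hR0 using hR
  have hH : ∀ p, ∃ H : ℝ, 0 ≤ H ∧ ∀ x, |h p x| ≤ H := by
    intro p
    obtain ⟨H, hH⟩ := (isCompact_Icc (a := -(R p : ℝ)) (b := R p)).exists_bound_of_continuousOn
      (hhc p).continuousOn
    refine ⟨max H 0, le_max_right _ _, fun x => ?_⟩
    by_cases hx : |x| ≤ R p
    · exact (hH x (abs_le.1 hx)).trans (le_max_left _ _)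
    · rw [hR0 p x (not_le.1 hx).le, abs_zero]
      exact le_max_right _ _
  choose H hH0 hH using hH
  -- heights at least `H p` and pairwise more than two apart, so that a height interval
  -- `[A p, A p + 2]` determines `p`
  let A : ℕ → ℝ := fun p => ∑ i ∈ Finset.range (p + 1), (H i + 3)
  have hAH : ∀ p, H p + 3 ≤ A p := fun p =>
    Finset.single_le_sum (f := fun i => H i + 3) (fun i _ => by linarith [hH0 i])
      (Finset.mem_range.2 (Nat.lt_succ_self p))
  have hAlt : ∀ p q, p < q → A p + 2 < A q := by
    intro p q hpq
    have h1 : A q = A q.pred + (H q + 3) := by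
      obtain ⟨r, rfl⟩ : ∃ r, q = r + 1 := ⟨q - 1, by omega⟩
      exact Finset.sum_range_succ _ _
    have h2 : A p ≤ A q.pred := by
      refine Finset.sum_le_sum_of_subset_of_nonneg ?_ fun i _ _ => by linarith [hH0 i]
      refine Finset.range_subset_range.2 ?_
      have := Nat.pred_eq_sub_one (n := q)
      omega
    linarith [hH0 q]
  have hb : ∀ p, ∃ b : ℝ, 0 < b ∧ ∀ k : ℤ, |k| ≤ 3 * (R p : ℤ) + 2 → b ≤ ρ k := by
    intro p
    obtain ⟨b, B, hb, -, hbB⟩ := exists_local_bounds hpos hK hcomp (3 * R p + 2)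
    refine ⟨b, hb, fun k hk => (hbB k ?_).1⟩
    rw [← Int.cast_abs]
    exact_mod_cast hk
  choose b hb hbρ using hb
  let ε : ℕ → ℝ := fun p => min (1 / ((p : ℝ) + 1)) (b p / 2)
  have hε : ∀ p, 0 < ε p := fun p => lt_min (by positivity) (half_pos (hb p))
  let E : ℕ → Set ℕ := fun p => {n : ℕ | ∀ j : ℤ, (|j| ≤ (R p : ℤ) → A p ≤ |v (n + j)|) ∧
      (|j| ≤ (R p : ℤ) + 1 → |v (n + j)| ≤ A p + 2) ∧
      ((R p : ℤ) + 1 < |j| → |v (n + j)| * ρ j ≤ ε p)}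
  have hE : ∀ p, 0 < ldens (E p) := fun p =>
    hblocks (A p) (by linarith [hAH p, hH0 p]) (R p) (ε p) (hε p)
  -- the three defining properties of `E p`, with absolute positions
  have hE1 : ∀ p, ∀ n ∈ E p, ∀ k : ℤ, |k - n| ≤ (R p : ℤ) → A p ≤ |v k| := by
    intro p n hn k hk
    have := (hn (k - n)).1 hk
    rwa [add_sub_cancel] at this
  have hE2 : ∀ p, ∀ n ∈ E p, ∀ k : ℤ, |k - n| ≤ (R p : ℤ) → |v k| ≤ A p + 2 := by
    intro p n hn k hk
    have := (hn (k - n)).2.1 (by omega)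
    rwa [add_sub_cancel] at this
  have hE3 : ∀ p, ∀ n ∈ E p, ∀ k : ℤ, (R p : ℤ) + 1 < |k - n| → |k - n| ≤ 3 * (R p : ℤ) + 2 →
      |v k| < 1 := by
    intro p n hn k hk hk'
    have h1 := (hn (k - n)).2.2 hk
    rw [add_sub_cancel] at h1
    have h2 := hbρ p _ hk'
    have h3 : ε p ≤ b p / 2 := min_le_right _ _
    have h4 := hb p
    by_contra! h5
    nlinarith
  have hA1 : ∀ p, 1 ≤ A p := fun p => by linarith [hAH p, hH0 p]
  have hne : ∀ p q, p ≠ q → ∀ n ∈ E p, ∀ m ∈ E q, ∀ k : ℤ, |k - n| ≤ (R p : ℤ) →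
      |k - m| ≤ (R q : ℤ) → False := by
    intro p q hpq n hn m hm k hk hk'
    have h1 := hE1 p n hn k hk
    have h2 := hE2 p n hn k hk
    have h3 := hE1 q m hm k hk'
    have h4 := hE2 q m hm k hk'
    rcases lt_or_gt_of_ne hpq with h | h
    · linarith [hAlt p q h]
    · linarith [hAlt q p h]
  have hout : ∀ p q, ∀ n ∈ E p, ∀ m ∈ E q, ∀ k : ℤ, (R p : ℤ) + 1 < |k - n| →
      |k - n| ≤ 3 * (R p : ℤ) + 2 → |k - m| ≤ (R q : ℤ) → False := by
    intro p q n hn m hm k h1 h2 h3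
    linarith [hE3 p n hn k h1 h2, hE1 q m hm k h3, hA1 q]
  have hsep : ∀ p, ∀ n ∈ E p, ∀ m ∈ E p, n + 2 ≤ m → m ≤ n + 2 * R p + 1 → False := by
    intro p n hn m hm h1 h2
    have := hR1 p
    refine hout p p n hn m hm (m + R p) ?_ ?_ ?_
    · rw [abs_of_nonneg] <;> omega
    · rw [abs_of_nonneg] <;> omega
    · rw [abs_of_nonneg] <;> omega
  -- the visits in `E p` may come in pairs of neighbours; keep the first of each pair
  let E' : ℕ → Set ℕ := fun p => {n | n ∈ E p ∧ ∀ m ∈ E p, n ≠ m + 1}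
  have hE' : ∀ p, 0 < ldens (E' p) := by
    intro p
    refine ldens_pos_of_subset_union_succ ?_ (hE p)
    intro n hn
    by_cases hm : ∃ m ∈ E p, n = m + 1
    · obtain ⟨m, hm, rfl⟩ := hm
      refine Or.inr ⟨m, ⟨hm, ?_⟩, rfl⟩
      rintro l hl rfl
      have := hR1 p
      exact hsep p l hl _ hn (by omega) (by omega)
    · push Not at hm
      exact Or.inl ⟨hn, hm⟩
  have hdisj : ∀ p q, ∀ n ∈ E' p, ∀ m ∈ E' q, ∀ k : ℤ, |k - n| ≤ (R p : ℤ) + 1 →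
      |k - m| ≤ (R q : ℤ) → p = q ∧ n = m := by
    intro p q n hn m hm k hk hk'
    have hRp := hR1 p
    have hRq := hR1 q
    rw [abs_le] at hk hk'
    by_cases hpq : p = q
    · subst hpq
      refine ⟨rfl, ?_⟩
      by_contra hnm
      rcases lt_or_gt_of_ne hnm with h | h
      · have := hm.2 n hn.1
        exact hsep p n hn.1 m hm.1 (by omega) (by omega)
      · have := hn.2 m hm.1
        exact hsep p m hm.1 n hn.1 (by omega) (by omega)
    · exfalso
      by_cases h1 : |k - n| ≤ (R p : ℤ)
      · exact hne p q hpq n hn.1 m hm.1 k h1 (abs_le.2 hk')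
      have h2 : k - n = R p + 1 ∨ k - n = -(R p + 1) := by
        rw [abs_le] at h1
        omega
      -- at the rim of the `p`-block, step inwards or outwards without leaving the `q`-block
      rcases h2 with h2 | h2
      · by_cases h3 : k - m < R q
        · refine hout p q n hn.1 m hm.1 (k + 1) ?_ ?_ ?_
          · rw [abs_of_nonneg] <;> omega
          · rw [abs_of_nonneg] <;> omega
          · rw [abs_le]; constructor <;> omega
        · refine hne p q hpq n hn.1 m hm.1 (k - 1) ?_ ?_ <;> rw [abs_le] <;> constructor <;> omega
      · by_cases h3 : -(R q : ℤ) < k - m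
        · refine hout p q n hn.1 m hm.1 (k - 1) ?_ ?_ ?_
          · rw [abs_of_nonpos] <;> omega
          · rw [abs_of_nonpos] <;> omega
          · rw [abs_le]; constructor <;> omega
        · refine hne p q hpq n hn.1 m hm.1 (k + 1) ?_ ?_ <;> rw [abs_le] <;> constructor <;> omega
  -- the frequently hypercyclic function: a copy of `h p` at every `n ∈ E' p`
  let ι := {i : ℕ × ℕ // i.2 ∈ E' i.1}
  let u : ι → ℝ → ℝ := fun i x => h i.1.1 (x - i.1.2)
  let f : ℝ → ℝ := fun x => ∑ᶠ i : ι, u i x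
  have hu : ∀ (i : ι) (x : ℝ), u i x ≠ 0 → |⌊x⌋ - (i.1.2 : ℤ)| ≤ (R i.1.1 : ℤ) := by
    intro i x hx
    have h1 : |x - i.1.2| < R i.1.1 := by
      by_contra! hle
      exact hx (hR0 _ _ hle)
    rw [abs_lt] at h1
    have h2 : ((⌊x⌋ : ℤ) : ℝ) ≤ x := Int.floor_le x
    have h3 := Int.lt_floor_add_one x
    have h4 : ((⌊x⌋ - (i.1.2 : ℤ) : ℤ) : ℝ) < (R i.1.1 : ℤ) := by push_cast; linarith
    have h5 : ((-(R i.1.1 : ℤ) - 1 : ℤ) : ℝ) < ((⌊x⌋ - (i.1.2 : ℤ) : ℤ) : ℝ) := by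
      push_cast; linarith
    rw [Int.cast_lt] at h4 h5
    rw [abs_le]
    constructor <;> omega
  -- so at most one translate is nonzero at any point
  have hsub : ∀ k : ℤ, {i : ι | |k - (i.1.2 : ℤ)| ≤ (R i.1.1 : ℤ)}.Subsingleton := by
    intro k i hi j hj
    have hi' : |k - (i.1.2 : ℤ)| ≤ (R i.1.1 : ℤ) := hi
    have := hdisj _ _ _ i.2 _ j.2 k (by omega) hj
    exact Subtype.ext (Prod.ext this.1 this.2)
  have hfc : Continuous f := by
    refine continuous_finsum (fun i => (hhc _).comp (by fun_prop)) fun x => ?_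
    refine ⟨Set.Ioo (⌊x⌋ - 1 : ℝ) (⌊x⌋ + 1),
      Ioo_mem_nhds (by linarith [Int.floor_le x]) (Int.lt_floor_add_one x), ?_⟩
    refine ((hsub (⌊x⌋ - 1)).finite.union (hsub ⌊x⌋).finite).subset ?_
    rintro i ⟨y, hy, hy1, hy2⟩
    have h1 := hu i y hy
    have h2 : ⌊x⌋ - 1 ≤ ⌊y⌋ := Int.le_floor.2 (by push_cast; exact hy1.le)
    have h3 : ⌊y⌋ < ⌊x⌋ + 1 := Int.floor_lt.2 (by push_cast; exact hy2)
    rcases (by omega : ⌊y⌋ = ⌊x⌋ - 1 ∨ ⌊y⌋ = ⌊x⌋) with h | h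
    · left; rw [← h]; exact h1
    · right; rw [← h]; exact h1
  have hfv : ∀ x, |f x| ≤ |v ⌊x⌋| := by
    intro x
    by_cases hx : ∃ i : ι, u i x ≠ 0
    · obtain ⟨i, hi⟩ := hx
      have hfi : f x = u i x := finsum_eq_single _ i fun j hj => by
        by_contra hne
        exact hj (hsub ⌊x⌋ (hu j x hne) (hu i x hi))
      rw [hfi]
      have h1 := hE1 _ _ i.2.1 ⌊x⌋ (hu i x hi)
      linarith [hH i.1.1 (x - i.1.2), hAH i.1.1]
    · push Not at hx
      have : f x = 0 := (finsum_congr hx).trans finsum_zero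
      rw [this, abs_zero]
      exact abs_nonneg _
  have hρfloor : ∀ x, ρ x ≤ K * ρ ⌊x⌋ := fun x => hcomp _ _ (by
    rw [abs_le]
    constructor <;> linarith [Int.floor_le x, Int.lt_floor_add_one x])
  refine ⟨f, memC0rho_iff.2 ⟨hfc, fun e he => ?_⟩, fun g hg e he => ?_⟩
  · obtain ⟨N, hN⟩ := memc0Z_iff.1 hv (e / K) (by positivity)
    refine ⟨N + 1, fun x hx => ?_⟩
    push_cast at hx
    have h1 : (N : ℤ) < |⌊x⌋| := by
      have h2 := Int.floor_le x
      have h3 := Int.lt_floor_add_one x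
      rcases lt_abs.1 hx with h | h
      · have : ((N : ℤ) : ℝ) < (⌊x⌋ : ℤ) := by push_cast; linarith
        rw [Int.cast_lt] at this
        exact lt_abs.2 (Or.inl this)
      · have : ((N : ℤ) : ℝ) < ((-⌊x⌋ : ℤ) : ℝ) := by push_cast; linarith
        rw [Int.cast_lt] at this
        exact lt_abs.2 (Or.inr this)
    have h2 := hN _ h1
    rw [abs_mul, abs_of_pos (hpos _)] at h2 ⊢
    calc |f x| * ρ x ≤ |v ⌊x⌋| * (K * ρ ⌊x⌋) :=
          mul_le_mul (hfv x) (hρfloor x) (hpos x).le (abs_nonneg _)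
      _ = K * (|v ⌊x⌋| * ρ ⌊x⌋) := by ring
      _ ≤ K * (e / K) := by gcongr
      _ = e := by field_simp
  · obtain ⟨i, hi⟩ := hdense g hg (e / 2) (by positivity)
    obtain ⟨l, hl⟩ := exists_nat_one_div_lt (show 0 < e / (2 * K) by positivity)
    set p := Nat.pair i l with hp
    have hhp : h p = d i := by simp [h, hp]
    have hεp : K * ε p ≤ e / 2 := by
      have h1 : (l : ℝ) ≤ p := by exact_mod_cast Nat.right_le_pair i l
      have h2 : ε p ≤ e / (2 * K) := (min_le_left _ _).trans
        ((one_div_le_one_div_of_le (by positivity) (by linarith)).trans hl.le)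
      calc K * ε p ≤ K * (e / (2 * K)) := by gcongr
        _ = e / 2 := by field_simp
    refine ldens_pos_mono ?_ (hE' p)
    intro n hn x
    have hfloor : ⌊x + n⌋ = ⌊x⌋ + n := Int.floor_add_natCast x n
    have hmain : |f (x + n) - h p x| * ρ x ≤ e / 2 := by
      by_cases hx : |⌊x⌋| ≤ (R p : ℤ) + 1
      · have : f (x + n) = h p x := by
          have h1 : f (x + n) = u ⟨(p, n), hn⟩ (x + n) := finsum_eq_single _ _ fun j hj => by
            by_contra hne
            have h2 := hu j _ hne
            have h3 := hdisj p _ n hn _ j.2 ⌊x + n⌋ (by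
              rw [hfloor, add_sub_cancel_right]; exact hx) h2
            exact hj (Subtype.ext (Prod.ext h3.1.symm h3.2.symm))
          rw [h1]
          simp [u]
        rw [this, sub_self, abs_zero, zero_mul]
        positivity
      · have h0 : h p x = 0 := by
          by_contra hne
          have := hu ⟨(p, n), hn⟩ (x + n) (by simpa [u] using hne)
          rw [hfloor] at this
          simp only [add_sub_cancel_right] at this
          omega
        have h1 := (hn.1 ⌊x⌋).2.2 (not_le.1 hx)
        have h2 := hfv (x + n)
        rw [hfloor, add_comm ⌊x⌋] at h2
        rw [h0, sub_zero]
        calc |f (x + n)| * ρ x ≤ |v (n + ⌊x⌋)| * (K * ρ ⌊x⌋) :=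
              mul_le_mul h2 (hρfloor x) (hpos x).le (abs_nonneg _)
          _ = K * (|v (n + ⌊x⌋)| * ρ ⌊x⌋) := by ring
          _ ≤ K * ε p := by gcongr
          _ ≤ e / 2 := hεp
    have h3 := hi x
    rw [← hhp] at h3
    have hρ := hpos x
    calc |f (x + n) - g x| * ρ x ≤ (|f (x + n) - h p x| + |h p x - g x|) * ρ x := by
          gcongr; exact abs_sub_le _ _ _
      _ ≤ e := by rw [add_mul]; linarith

/-- Let `ρ` be an admissible weight function on ℝ with
`sup_{k∈ℤ} ρ(k+1)/ρ(k) < ∞` and `w_k = ρ(k)/ρ(k+1)`. Then `B_w` is frequently hypercyclic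
on `c₀(ℤ)` if and only if the translation semigroup is frequently hypercyclic on `C₀^ρ(ℝ)`. -/
theorem bwShift_freqHypercyclic_iff_translation_freqHypercyclic
    (ρ : ℝ → ℝ) (hρ : Admissible ρ)
    (hsup : ∃ C : ℝ, ∀ k : ℤ, ρ ((k : ℝ) + 1) / ρ (k : ℝ) ≤ C) :
    FHBwShift ρ ↔ FHTransC0 ρ := by
  obtain ⟨K, hK, hcomp⟩ := exists_comparison hρ hsup
  have hpos := hρ.2.1
  constructor
  · intro h
    obtain ⟨v, hv, hb⟩ := h.exists_hasBlocks hpos hK hcomp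
    exact (hb.fhUnitTranslation hpos hK hcomp hv).fhTransC0 hpos hK hcomp
  · intro h
    obtain ⟨v, hv, hb⟩ := h.exists_hasBlocks hpos hK hcomp
    exact (hb.fhUnitTranslation hpos hK hcomp hv).fhBwShift hpos
end
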